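/- arXiv:0707.1974 — 5 statements merged into one kernel-verified Lean document; each statement's English description precedes it below -/
import Mathlib

section
/- Efros' theorem (generalized Laplace convolution theorem). Let p be a real number, q : ℝ → ℝ, F, G : ℝ → ℝ, f : [0,∞) → ℝ and g : [0,∞) × [0,∞) → ℝ. Assume: (i) ∫_0^∞ e^{−q(p)τ} f(τ) dτ = F(q(p)); (ii) for every τ ≥ 0, ∫_0^∞ e^{−pt} g(t,τ) dt = e^{−q(p)τ} G(p); (iii) the function (t,τ) ↦ e^{−pt} f(τ) g(t,τ) is integrable on (0,∞) × (0,∞). Then ∫_0^∞ e^{−pt} ( ∫_0^∞ f(τ) g(t,τ) dτ ) dt = F(q(p))·G(p). -/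
open MeasureTheory Real Filter Set

section WeightedFubini

variable {α β 𝕜 E : Type*} [MeasurableSpace α] [MeasurableSpace β]
  {μ : Measure α} {ν : Measure β} [SFinite μ] [SFinite ν]
  [NormedAddCommGroup E] [NormedSpace ℝ E] {g : α → β → E}

theorem integral_smul_integral_smul_swap [NormedField 𝕜] [NormedSpace 𝕜 E] [SMulCommClass ℝ 𝕜 E]
    {u : α → 𝕜} {f : β → 𝕜}
    (h_int : Integrable (fun w : α × β => u w.1 • f w.2 • g w.1 w.2) (μ.prod ν)) :
    ∫ t, u t • ∫ τ, f τ • g t τ ∂ν ∂μ = ∫ τ, f τ • ∫ t, u t • g t τ ∂μ ∂ν :=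
  calc ∫ t, u t • ∫ τ, f τ • g t τ ∂ν ∂μ
      = ∫ t, ∫ τ, u t • f τ • g t τ ∂ν ∂μ := by simp only [integral_smul]
    _ = ∫ τ, ∫ t, u t • f τ • g t τ ∂μ ∂ν := integral_integral_swap h_int
    _ = ∫ τ, f τ • ∫ t, u t • g t τ ∂μ ∂ν := by
      simp only [smul_comm (u _) (f _), integral_smul]

/-- Efros' theorem with arbitrary weights in place of the exponentials: on `(0, ∞)`, take
`u t = exp (-p * t)`, `e τ = exp (-q p * τ)` and `c = G p`. -/
theorem efros_theorem_general [RCLike 𝕜] [NormedSpace 𝕜 E] [CompleteSpace E]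
    {u : α → 𝕜} {f e : β → 𝕜} {c : E}
    (hg : ∀ᵐ τ ∂ν, ∫ t, u t • g t τ ∂μ = e τ • c)
    (h_int : Integrable (fun w : α × β => u w.1 • f w.2 • g w.1 w.2) (μ.prod ν)) :
    ∫ t, u t • ∫ τ, f τ • g t τ ∂ν ∂μ = (∫ τ, e τ * f τ ∂ν) • c :=
  calc ∫ t, u t • ∫ τ, f τ • g t τ ∂ν ∂μ
      = ∫ τ, f τ • ∫ t, u t • g t τ ∂μ ∂ν := integral_smul_integral_smul_swap h_int
    _ = ∫ τ, (e τ * f τ) • c ∂ν := by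
      refine integral_congr_ae (hg.mono fun τ hτ => ?_)
      simp only [hτ, smul_smul, mul_comm]
    _ = (∫ τ, e τ * f τ ∂ν) • c := integral_smul_const _ c

end WeightedFubini

/-- Efros' theorem (generalized Laplace-transform convolution theorem):
if `L[f](q(p)) = F(q(p))`, `L[g(·,τ)](p) = e^{−q(p)τ} G(p)` for all `τ ≥ 0`, and
`(t,τ) ↦ e^{−pt} f(τ) g(t,τ)` is integrable on `(0,∞) × (0,∞)`, then
`L[ ∫_0^∞ f(τ) g(·,τ) dτ ](p) = F(q(p)) G(p)`. -/
theorem efros_theorem (p : ℝ) (q F G : ℝ → ℝ) (f : ℝ → ℝ) (g : ℝ → ℝ → ℝ)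
    (h₁ : ∫ τ in Ioi (0 : ℝ), Real.exp (-q p * τ) * f τ = F (q p))
    (h₂ : ∀ τ : ℝ, 0 ≤ τ →
      ∫ t in Ioi (0 : ℝ), Real.exp (-p * t) * g t τ = Real.exp (-q p * τ) * G p)
    (h₃ : IntegrableOn (fun w : ℝ × ℝ => Real.exp (-p * w.1) * f w.2 * g w.1 w.2)
      (Ioi (0 : ℝ) ×ˢ Ioi (0 : ℝ))) :
    ∫ t in Ioi (0 : ℝ), Real.exp (-p * t) * ∫ τ in Ioi (0 : ℝ), f τ * g t τ =
      F (q p) * G p := by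
  have laplace_g : ∀ᵐ τ ∂volume.restrict (Ioi (0 : ℝ)),
      ∫ t in Ioi (0 : ℝ), Real.exp (-p * t) • g t τ = Real.exp (-q p * τ) • G p :=
    ae_restrict_of_forall_mem measurableSet_Ioi fun τ hτ => h₂ τ (le_of_lt hτ)
  rw [IntegrableOn, Measure.volume_eq_prod, ← Measure.prod_restrict] at h₃
  simp only [mul_assoc] at h₃
  rw [← h₁]
  exact efros_theorem_general (f := f) laplace_g h₃
end

section
/- Laplace transform of the Wright M-density (covers equation (2.5) and Lemma part (a)). Let 0 < δ < 1, c > 0 and p > 0. Then ∫_0^∞ e^{−pt}·(cδ/t^{δ+1})·M(c/t^δ; δ) dt = exp(−c·p^δ). In particular, taking δ = 2β with 0 < 2β < 1 and c = τ > 0 gives the inverse Laplace transform L^{−1}(e^{−τ p^{2β}})(t) = (2βτ/t^{2β+1})·M(τ/t^{2β}; 2β), and taking c = (z+ατ)/a gives L{ ((z+ατ)δ)/(a t^{δ+1})·M((z+ατ)/(a t^δ); δ) }(p) = exp(−((z+ατ)/a)·p^δ). -/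
open MeasureTheory Real Filter Set

/-- The Wright-type auxiliary function `M(y; δ)`. -/
noncomputable def Mwr (y δ : ℝ) : ℝ :=
  ∑' n : ℕ, (-y) ^ n / ((n.factorial : ℝ) * Real.Gamma (-δ * (n : ℝ) + 1 - δ))

/-!
For `c > 0`, `0 < δ < 1` and `π / 2 < φ < π` the density `(cδ / t^(δ+1)) M(c / t^δ; δ)` equals
`π⁻¹ Im ∫ e^(ts) e^(-c s^δ) ds` along the ray of angle `φ`: expanding in powers of `c` leaves the
integrals of `s^(δn) e^(ts)`, which are Gamma integrals on a rotated ray, and the reflection formula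
turns their imaginary parts into the Wright coefficients. By Fubini the Laplace transform is then
`π⁻¹ Im ∫ f(s) / (p - s) ds` along the ray, where `f(s) = e^(-c s^δ)`. When also `δφ < π / 2`, `f`
decays in the sector around the positive axis bounded by the ray and its conjugate; as `f` is real
on that axis, the imaginary part is half of Cauchy's integral over the boundary of the sector, and
so equals `π f(p)`.
-/

open Topology Bornology
open scoped Interval
open Complex (I slitPlane)

section Strip

variable {E : Type*} [NormedAddCommGroup E] [NormedSpace ℂ E] [CompleteSpace E] {g : ℂ → E} {φ : ℝ}

theorem tendsto_integral_vertical {l : Filter ℝ} [l.IsCountablyGenerated] {a : E}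
    (hg : ContinuousOn g (Complex.im ⁻¹' [[0, φ]]))
    (ha : Tendsto g (comap Complex.re l ⊓ 𝓟 (Complex.im ⁻¹' [[0, φ]])) (𝓝 a)) :
    Tendsto (fun x : ℝ => ∫ y in (0 : ℝ)..φ, g (x + y * I)) l (𝓝 (φ • a)) := by
  have hmem : ∀ x : ℝ, MapsTo (fun y : ℝ => (x + y * I : ℂ)) [[0, φ]] (Complex.im ⁻¹' [[0, φ]]) :=
    fun x y hy => by simpa using hy
  have hcont : ∀ x : ℝ, ContinuousOn (fun y : ℝ => g (x + y * I)) [[0, φ]] := fun x =>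
    hg.comp (by fun_prop) (hmem x)
  have hpair : Tendsto (fun q : ℝ × ℝ => (q.1 + q.2 * I : ℂ)) (l ×ˢ 𝓟 [[0, φ]])
      (comap Complex.re l ⊓ 𝓟 (Complex.im ⁻¹' [[0, φ]])) := by
    refine tendsto_inf.2 ⟨tendsto_comap_iff.2 ?_, tendsto_principal.2 ?_⟩
    · simpa [Function.comp_def] using tendsto_fst
    · filter_upwards [tendsto_snd.eventually (mem_principal_self _)] with q hq
      exact hmem q.1 hq
  have hunif : TendstoUniformlyOn (fun (x y : ℝ) => g (x + y * I)) (fun _ => a) l [[0, φ]] :=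
    tendstoUniformlyOn_iff_tendsto.2 (tendsto_left_nhds_uniformity.comp (ha.comp hpair))
  simpa using hunif.tendsto_intervalIntegral_of_continuousOn (μ := volume)
    (Eventually.of_forall hcont)

theorem tendsto_integral_horizontal_sub {a b : E}
    (hg : DifferentiableOn ℂ g (Complex.im ⁻¹' [[0, φ]]))
    (ha : Tendsto g (comap Complex.re atTop ⊓ 𝓟 (Complex.im ⁻¹' [[0, φ]])) (𝓝 a))
    (hb : Tendsto g (comap Complex.re atBot ⊓ 𝓟 (Complex.im ⁻¹' [[0, φ]])) (𝓝 b)) :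
    Tendsto (fun R : ℝ => (∫ x in -R..R, g (x + φ * I)) - ∫ x in -R..R, g x) atTop
      (𝓝 (I • φ • (a - b))) := by
  have hright := tendsto_integral_vertical hg.continuousOn ha
  have hleft := (tendsto_integral_vertical hg.continuousOn hb).comp tendsto_neg_atTop_atBot
  rw [smul_sub, smul_sub]
  refine ((hright.const_smul I).sub (hleft.const_smul I)).congr fun R => ?_
  have hrect := Complex.integral_boundary_rect_eq_zero_of_differentiableOn g (-R : ℝ) (R + φ * I)
    (hg.mono fun w hw => by simpa using hw.2)
  simp only [Complex.ofReal_re, Complex.ofReal_im, Complex.add_re, Complex.add_im,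
    Complex.re_ofReal_mul, Complex.im_ofReal_mul, Complex.I_re, Complex.I_im, mul_zero, add_zero,
    mul_one, zero_add, Complex.ofReal_zero, zero_mul] at hrect
  rw [Function.comp_apply, ← sub_eq_zero, ← hrect]
  abel

end Strip

/-- The contour integral `∫ f(s) ds` along the ray `s = r e ^ (iφ)`, `r > 0`. -/
noncomputable def rayIntegral (f : ℂ → ℂ) (φ : ℝ) : ℂ :=
  ∫ r in Ioi (0 : ℝ), Complex.exp (φ * I) * f (r * Complex.exp (φ * I))

/-- The closed sector, with vertex `0` included, between the positive real axis and the ray of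
angle `φ`, where `φ` may have either sign. -/
def sector (φ : ℝ) : Set ℂ := {s | s.arg ∈ [[0, φ]]}

theorem arg_exp_of_abs_im_lt {w : ℂ} (hw : |w.im| < π) : (Complex.exp w).arg = w.im := by
  rw [← Complex.log_im, Complex.log_exp (abs_lt.1 hw).1 (abs_lt.1 hw).2.le]

theorem abs_le_of_mem_uIcc_zero {θ φ : ℝ} (hθ : θ ∈ [[0, φ]]) : |θ| ≤ |φ| := by
  simpa using abs_sub_left_of_mem_uIcc hθ

section Sector

variable {φ : ℝ}

theorem mapsTo_exp_slitPlane (hφ : |φ| < π) :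
    MapsTo Complex.exp (Complex.im ⁻¹' [[0, φ]]) slitPlane := fun w hw => by
  have him : |w.im| < π := (abs_le_of_mem_uIcc_zero hw).trans_lt hφ
  rw [Complex.mem_slitPlane_iff_arg, arg_exp_of_abs_im_lt him]
  exact ⟨(abs_lt.1 him).2.ne, Complex.exp_ne_zero w⟩

theorem mapsTo_exp_sector (hφ : |φ| < π) :
    MapsTo Complex.exp (Complex.im ⁻¹' [[0, φ]]) (sector φ) := fun w hw => by
  rw [sector, mem_ofPred_eq, arg_exp_of_abs_im_lt ((abs_le_of_mem_uIcc_zero hw).trans_lt hφ)]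
  exact hw

theorem ofReal_mul_exp_mem_sector (hφ : |φ| < π) {r θ : ℝ} (hr : 0 < r) (hθ : θ ∈ [[0, φ]]) :
    (r : ℂ) * Complex.exp (θ * I) ∈ sector φ := by
  rw [sector, mem_ofPred_eq, Complex.arg_real_mul _ hr]
  exact mapsTo_exp_sector hφ (by simpa using hθ)

theorem norm_ofReal_mul_exp {r : ℝ} (hr : 0 ≤ r) (θ : ℝ) :
    ‖(r : ℂ) * Complex.exp (θ * I)‖ = r := by
  rw [norm_mul, Complex.norm_exp_ofReal_mul_I, Complex.norm_real, norm_of_nonneg hr, mul_one]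

theorem re_ofReal_mul_exp (r θ : ℝ) : ((r : ℂ) * Complex.exp (θ * I)).re = r * cos θ := by
  rw [Complex.re_ofReal_mul, Complex.exp_ofReal_mul_I_re]

theorem im_ofReal_mul_exp (r θ : ℝ) : ((r : ℂ) * Complex.exp (θ * I)).im = r * sin θ := by
  rw [Complex.im_ofReal_mul, Complex.exp_ofReal_mul_I_im]

theorem cos_le_cos_of_abs_le {x y : ℝ} (hxy : |x| ≤ |y|) (hy : |y| ≤ π) : cos y ≤ cos x := by
  rw [← cos_abs x, ← cos_abs y]
  exact cos_le_cos_of_nonneg_of_le_pi (abs_nonneg x) hy hxy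

-- The exponential maps the strip between `0` and `φ` onto the sector without its vertex.
theorem tendsto_integral_exp_horizontal_sub {h : ℂ → ℂ} {a b : ℂ} (hφ : |φ| < π)
    (hh : DifferentiableOn ℂ h slitPlane)
    (ha : Tendsto (fun s => s * h s) (cobounded ℂ ⊓ 𝓟 (sector φ)) (𝓝 a))
    (hb : Tendsto (fun s => s * h s) (𝓝[sector φ] 0) (𝓝 b)) :
    Tendsto (fun R : ℝ =>
      (∫ x in -R..R, Complex.exp (x + φ * I) * h (Complex.exp (x + φ * I))) -
        ∫ x in -R..R, Complex.exp x * h (Complex.exp x)) atTop (𝓝 (I * (φ * (a - b)))) := by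
  have hsector := tendsto_principal_principal.2 (mapsTo_exp_sector hφ)
  exact tendsto_integral_horizontal_sub (g := fun w => Complex.exp w * h (Complex.exp w))
    (Complex.differentiable_exp.differentiableOn.mul
      (hh.comp Complex.differentiable_exp.differentiableOn (mapsTo_exp_slitPlane hφ)))
    (ha.comp (Complex.tendsto_exp_comap_re_atTop.inf hsector))
    (hb.comp (Complex.tendsto_exp_comap_re_atBot.inf hsector))

theorem tendsto_integral_exp_rayIntegral {f : ℂ → ℂ}
    (hf : IntegrableOn (fun r : ℝ => f (r * Complex.exp (φ * I))) (Ioi 0)) :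
    Tendsto (fun R : ℝ => ∫ x in -R..R, Complex.exp (x + φ * I) * f (Complex.exp (x + φ * I))) atTop
      (𝓝 (rayIntegral f φ)) := by
  have himage : rexp '' univ = Ioi 0 := by rw [image_univ, range_exp]
  have hderiv : ∀ x ∈ univ, HasDerivWithinAt rexp (rexp x) univ x := fun x _ =>
    (Real.hasDerivAt_exp x).hasDerivWithinAt
  have hsubst : (fun x : ℝ => |rexp x| •
      (Complex.exp (φ * I) * f ((rexp x : ℝ) * Complex.exp (φ * I)))) =
      fun x : ℝ => Complex.exp (x + φ * I) * f (Complex.exp (x + φ * I)) := by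
    funext x
    rw [abs_of_pos (exp_pos x), Complex.real_smul, Complex.exp_add, Complex.ofReal_exp, mul_assoc]
  have hint : IntegrableOn (fun r : ℝ => Complex.exp (φ * I) * f (r * Complex.exp (φ * I)))
      (Ioi 0) := hf.const_mul _
  rw [← himage, integrableOn_image_iff_integrableOn_abs_deriv_smul MeasurableSet.univ hderiv
    exp_injective.injOn, hsubst, integrableOn_univ] at hint
  rw [rayIntegral, ← himage, integral_image_eq_integral_abs_deriv_smul MeasurableSet.univ hderiv
    exp_injective.injOn, hsubst, setIntegral_univ]
  exact intervalIntegral_tendsto_integral hint tendsto_neg_atTop_atBot tendsto_id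

theorem rayIntegral_eq_rayIntegral_zero {f : ℂ → ℂ} (hφ : |φ| < π)
    (hf : DifferentiableOn ℂ f slitPlane)
    (hinfty : Tendsto (fun s => s * f s) (cobounded ℂ ⊓ 𝓟 (sector φ)) (𝓝 0))
    (hzero : Tendsto (fun s => s * f s) (𝓝[sector φ] 0) (𝓝 0))
    (hray : IntegrableOn (fun r : ℝ => f (r * Complex.exp (φ * I))) (Ioi 0))
    (haxis : IntegrableOn (fun r : ℝ => f r) (Ioi 0)) :
    rayIntegral f φ = rayIntegral f 0 := by
  have hdiff := tendsto_integral_exp_horizontal_sub hφ hf hinfty hzero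
  have hlim := (tendsto_integral_exp_rayIntegral hray).sub
    (tendsto_integral_exp_rayIntegral (φ := 0) (by simpa using haxis))
  simp only [Complex.ofReal_zero, zero_mul, add_zero] at hlim
  simp only [sub_zero, mul_zero] at hdiff
  exact sub_eq_zero.1 (tendsto_nhds_unique hlim hdiff)

end Sector

section CauchyKernel

variable {p φ : ℝ}

theorem sub_exp_mem_slitPlane (p : ℝ) (hφ : 0 < sin φ) (x : ℝ) :
    (p : ℂ) - Complex.exp (x + φ * I) ∈ slitPlane := by
  have him : ((p : ℂ) - Complex.exp (x + φ * I)).im = -(rexp x * sin φ) := by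
    simp [Complex.exp_im]
  exact Or.inr (him.trans_ne (neg_ne_zero.2 (mul_pos (exp_pos x) hφ).ne'))

theorem mul_sin_le_norm_sub (p r φ : ℝ) :
    p * sin φ ≤ ‖(p : ℂ) - r * Complex.exp (φ * I)‖ := by
  -- After a rotation by `-φ` the distance is bounded below by an imaginary part.
  have hrotate : ((p : ℂ) - r * Complex.exp (φ * I)) * Complex.exp ((-φ : ℝ) * I) =
      p * Complex.exp ((-φ : ℝ) * I) - r := by
    rw [sub_mul, mul_assoc, ← Complex.exp_add, Complex.ofReal_neg, neg_mul, add_neg_cancel,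
      Complex.exp_zero, mul_one]
  calc p * sin φ = -((p : ℂ) * Complex.exp ((-φ : ℝ) * I) - r).im := by
        rw [Complex.sub_im, im_ofReal_mul_exp, sin_neg, Complex.ofReal_im]; ring
    _ ≤ ‖(p : ℂ) * Complex.exp ((-φ : ℝ) * I) - r‖ :=
        (neg_le_abs _).trans (Complex.abs_im_le_norm _)
    _ = ‖(p : ℂ) - r * Complex.exp (φ * I)‖ := by
        rw [← hrotate, norm_mul, Complex.norm_exp_ofReal_mul_I, mul_one]

theorem im_intervalIntegral_exp_div_sub (p : ℝ) (hφ : 0 < sin φ) (a b : ℝ) :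
    (∫ x in a..b, Complex.exp (x + φ * I) / (Complex.exp (x + φ * I) - p)).im =
      (p - Complex.exp (b + φ * I)).arg - (p - Complex.exp (a + φ * I)).arg := by
  have hderiv : ∀ x ∈ [[a, b]], HasDerivAt
      (fun x : ℝ => Complex.log (p - Complex.exp (x + φ * I)))
      (Complex.exp (x + φ * I) / (Complex.exp (x + φ * I) - p)) x := fun x _ => by
    have hexp : HasDerivAt (fun x : ℝ => Complex.exp (x + φ * I)) (Complex.exp (x + φ * I)) x := by
      simpa using (((hasDerivAt_id x).ofReal_comp).add_const (φ * I)).cexp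
    convert (hexp.const_sub (p : ℂ)).clog_real (sub_exp_mem_slitPlane p hφ x) using 1
    rw [← neg_sub (p : ℂ), div_neg, neg_div]
  have hint : IntervalIntegrable
      (fun x : ℝ => Complex.exp (x + φ * I) / (Complex.exp (x + φ * I) - p)) volume a b := by
    refine Continuous.intervalIntegrable (.div (by fun_prop) (by fun_prop) fun x => ?_) _ _
    rw [← neg_sub, neg_ne_zero]
    exact Complex.slitPlane_ne_zero (sub_exp_mem_slitPlane p hφ x)
  rw [intervalIntegral.integral_eq_sub_of_hasDerivAt hderiv hint, Complex.sub_im, Complex.log_im,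
    Complex.log_im]

theorem tendsto_im_intervalIntegral_exp_div_sub (hφ₀ : 0 < φ) (hφ₁ : φ < π) (hp : 0 < p) :
    Tendsto (fun R : ℝ =>
      (∫ x in -R..R, Complex.exp (x + φ * I) / (Complex.exp (x + φ * I) - p)).im) atTop
      (𝓝 (φ - π)) := by
  have hsin : 0 < sin φ := sin_pos_of_pos_of_lt_pi hφ₀ hφ₁
  have hvanish : Tendsto (fun R : ℝ => Complex.exp (-R)) atTop (𝓝 0) := by
    simpa [Function.comp_def] using
      (Complex.continuous_ofReal.tendsto 0).comp tendsto_exp_neg_atTop_nhds_zero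
  have hfar : Tendsto (fun R : ℝ => ((p : ℂ) - Complex.exp (R + φ * I)).arg) atTop
      (𝓝 (φ - π)) := by
    have hscale : ∀ R : ℝ, ((p : ℂ) - Complex.exp (R + φ * I)).arg =
        (Complex.exp (-R) * p - Complex.exp (φ * I)).arg := fun R => by
      rw [← Complex.arg_real_mul _ (exp_pos (-R)), Complex.ofReal_exp, mul_sub, ← Complex.exp_add,
        Complex.ofReal_neg, neg_add_cancel_left]
    have him : 0 < (Complex.exp (φ * I)).im := by rwa [Complex.exp_ofReal_mul_I_im]
    have harg : (0 * (p : ℂ) - Complex.exp (φ * I)).arg = φ - π := by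
      rw [zero_mul, zero_sub, Complex.arg_neg_eq_arg_sub_pi_of_im_pos him,
        Complex.arg_exp_mul_I, toIocMod_eq_self two_pi_pos |>.2 ⟨by linarith, by linarith⟩]
    simp only [hscale, ← harg]
    refine (Complex.continuousAt_arg ?_).tendsto.comp ((hvanish.mul_const _).sub_const _)
    exact Or.inr (by simpa using him.ne')
  have hnear : Tendsto (fun R : ℝ => ((p : ℂ) - Complex.exp ((-R : ℝ) + φ * I)).arg) atTop
      (𝓝 0) := by
    have hlim : Tendsto (fun R : ℝ => (p : ℂ) - Complex.exp ((-R : ℝ) + φ * I)) atTop (𝓝 p) := by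
      simpa [Complex.exp_add] using (hvanish.mul_const (Complex.exp (φ * I))).const_sub (p : ℂ)
    simpa only [Complex.arg_ofReal_of_nonneg hp.le, Function.comp_def] using
      (Complex.continuousAt_arg (Complex.ofReal_mem_slitPlane.2 hp)).tendsto.comp hlim
  simpa only [im_intervalIntegral_exp_div_sub p hsin, sub_zero] using hfar.sub hnear

theorem integral_laplace_kernel {r : ℝ} (hr : 0 < r) (hφ : cos φ ≤ 0) (hp : 0 < p) (a b : ℂ) :
    ∫ t in Ioi (0 : ℝ), a * (Complex.exp (t * (r * Complex.exp (φ * I))) *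
        ((rexp (-p * t) : ℝ) * b)) = a * (b / (p - r * Complex.exp (φ * I))) := by
  have hre : (r * Complex.exp (φ * I) - p).re < 0 := by
    rw [Complex.sub_re, re_ofReal_mul_exp, Complex.ofReal_re]
    linarith [mul_nonpos_of_nonneg_of_nonpos hr.le hφ]
  have hpoint : ∀ t : ℝ, a * (Complex.exp (t * (r * Complex.exp (φ * I))) *
      ((rexp (-p * t) : ℝ) * b)) = a * b * Complex.exp ((r * Complex.exp (φ * I) - p) * t) :=
    fun t => by
    rw [show (r * Complex.exp (φ * I) - p) * t = t * (r * Complex.exp (φ * I)) + (-p * t : ℝ) by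
      push_cast; ring, Complex.exp_add, Complex.ofReal_exp]
    ring
  simp only [hpoint]
  rw [integral_const_mul, integral_exp_mul_complex_Ioi hre 0, Complex.ofReal_zero, mul_zero,
    Complex.exp_zero, ← neg_sub (p : ℂ), neg_div_neg_eq, mul_one_div, mul_div_assoc]

theorem tendsto_mul_dslope_cobounded {f : ℂ → ℂ} {S : Set ℂ}
    (hf : Tendsto f (cobounded ℂ ⊓ 𝓟 S) (𝓝 0)) (a : ℂ) :
    Tendsto (fun s => s * dslope f a s) (cobounded ℂ ⊓ 𝓟 S) (𝓝 (-f a)) := by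
  have hratio : Tendsto (fun s : ℂ => (1 - a * s⁻¹)⁻¹) (cobounded ℂ ⊓ 𝓟 S) (𝓝 1) := by
    have hinv : Tendsto (fun s : ℂ => s⁻¹) (cobounded ℂ ⊓ 𝓟 S) (𝓝 0) :=
      tendsto_inv₀_cobounded.mono_left inf_le_left
    simpa using ((hinv.const_mul a).const_sub 1).inv₀ (by simp)
  have hprod := hratio.mul (hf.sub_const (f a))
  rw [one_mul, zero_sub] at hprod
  refine hprod.congr' (Eventually.filter_mono inf_le_left ?_)
  filter_upwards [eventually_ne_cobounded a, eventually_ne_cobounded 0] with s hsa hs0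
  have hfactor : 1 - a * s⁻¹ = (s - a) / s := by rw [sub_div, div_self hs0, div_eq_mul_inv]
  rw [dslope_of_ne _ hsa, slope_def_field, hfactor, inv_div]
  ring

theorem tendsto_mul_dslope_zero {f : ℂ → ℂ} {S : Set ℂ}
    (hf : Tendsto (fun s => s * f s) (𝓝[S] 0) (𝓝 0)) {a : ℂ} (ha : a ≠ 0) :
    Tendsto (fun s => s * dslope f a s) (𝓝[S] 0) (𝓝 0) := by
  have hid : Tendsto (fun s : ℂ => s) (𝓝[S] 0) (𝓝 0) := nhdsWithin_le_nhds
  have hquot := (hf.sub (hid.mul_const (f a))).div (hid.sub_const a) (by simpa using ha)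
  rw [zero_mul, sub_zero, zero_div] at hquot
  refine hquot.congr' ?_
  filter_upwards [hid.eventually_ne ha.symm] with s hsa
  rw [dslope_of_ne _ hsa, slope_def_field, Pi.div_apply]
  ring

end CauchyKernel

/-- `f` is holomorphic off the negative real axis, real on the positive real axis, and decays in
the sector of angle `φ` so as to admit Cauchy's formula on the boundary of that sector and of its
complex conjugate. -/
structure IsRealSectorial (f : ℂ → ℂ) (φ : ℝ) : Prop where
  differentiableOn : DifferentiableOn ℂ f slitPlane
  eq_ofReal_re : ∀ x : ℝ, 0 < x → f x = (f x).re
  tendsto_mul_zero : Tendsto (fun s => s * f s) (𝓝[sector φ] 0) (𝓝 0)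
  tendsto_cobounded : Tendsto f (cobounded ℂ ⊓ 𝓟 (sector φ)) (𝓝 0)
  integrableOn_ray : IntegrableOn (fun r : ℝ => f (r * Complex.exp (φ * I))) (Ioi 0)

namespace IsRealSectorial

variable {f : ℂ → ℂ} {p φ : ℝ}

theorem integrableOn_div_sub (hf : IsRealSectorial f φ) (hφ : 0 < sin φ) (hp : 0 < p) :
    IntegrableOn (fun r : ℝ => f (r * Complex.exp (φ * I)) / (p - r * Complex.exp (φ * I)))
      (Ioi 0) := by
  simp only [div_eq_mul_inv]
  refine hf.integrableOn_ray.mul_bdd (c := (p * sin φ)⁻¹) (by fun_prop) (ae_of_all _ fun r => ?_)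
  rw [norm_inv]
  exact inv_anti₀ (mul_pos hp hφ) (mul_sin_le_norm_sub p r φ)

theorem im_intervalIntegral_exp_mul_dslope (hf : IsRealSectorial f φ) (hp : 0 < p) (a b : ℝ) :
    (∫ x in a..b, Complex.exp x * dslope f p (Complex.exp x)).im = 0 := by
  have hcongr : ∀ᵐ x : ℝ, x ∈ Ι a b → Complex.exp x * dslope f p (Complex.exp x) =
      ((rexp x * (((f (rexp x)).re - (f p).re) / (rexp x - p)) : ℝ) : ℂ) := by
    filter_upwards [Measure.ae_ne volume (log p)] with x hx _
    have hne : Complex.exp x ≠ p := fun h => hx <| by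
      rw [← Complex.ofReal_exp, Complex.ofReal_inj] at h
      rw [← h, log_exp]
    rw [dslope_of_ne _ hne, slope_def_field, ← Complex.ofReal_exp,
      hf.eq_ofReal_re _ (exp_pos x), hf.eq_ofReal_re p hp]
    push_cast
    rfl
  rw [intervalIntegral.integral_congr_ae hcongr, intervalIntegral.integral_ofReal,
    Complex.ofReal_im]

theorem im_intervalIntegral_exp_add_mul_dslope (hf : IsRealSectorial f φ) (hφ₀ : 0 < φ)
    (hφ₁ : φ < π) (hp : 0 < p) (a b : ℝ) :
    (∫ x in a..b, Complex.exp (x + φ * I) * dslope f p (Complex.exp (x + φ * I))).im =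
      -(∫ x in a..b, Complex.exp (x + φ * I) *
        (f (Complex.exp (x + φ * I)) / (p - Complex.exp (x + φ * I)))).im -
      (f p).re * (∫ x in a..b, Complex.exp (x + φ * I) / (Complex.exp (x + φ * I) - p)).im := by
  have hsub : ∀ x : ℝ, (p : ℂ) - Complex.exp (x + φ * I) ≠ 0 := fun x =>
    Complex.slitPlane_ne_zero (sub_exp_mem_slitPlane p (sin_pos_of_pos_of_lt_pi hφ₀ hφ₁) x)
  have hsub' : ∀ x : ℝ, Complex.exp (x + φ * I) - p ≠ 0 := fun x => by
    rw [← neg_sub, neg_ne_zero]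
    exact hsub x
  have hcont : Continuous fun x : ℝ => f (Complex.exp (x + φ * I)) :=
    hf.differentiableOn.continuousOn.comp_continuous (by fun_prop) fun x =>
      mapsTo_exp_slitPlane (φ := φ) (by rwa [abs_of_pos hφ₀]) (by simp)
  have hpoint : ∀ x : ℝ, Complex.exp (x + φ * I) * dslope f p (Complex.exp (x + φ * I)) =
      -(Complex.exp (x + φ * I) * (f (Complex.exp (x + φ * I)) / (p - Complex.exp (x + φ * I)))) -
      (f p).re * (Complex.exp (x + φ * I) / (Complex.exp (x + φ * I) - p)) := fun x => by
    rw [dslope_of_ne _ (sub_ne_zero.1 (hsub' x)), slope_def_field, hf.eq_ofReal_re p hp,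
      Complex.ofReal_re, ← neg_sub _ (p : ℂ), div_neg]
    ring
  simp only [hpoint]
  rw [intervalIntegral.integral_sub, intervalIntegral.integral_neg,
    intervalIntegral.integral_const_mul, Complex.sub_im, Complex.neg_im, Complex.im_ofReal_mul]
  · exact Continuous.intervalIntegrable
      (.neg (.mul (by fun_prop) (hcont.div (by fun_prop) hsub))) _ _
  · exact Continuous.intervalIntegrable
      (.mul (by fun_prop) (.div (by fun_prop) (by fun_prop) hsub')) _ _

theorem tendsto_im_intervalIntegral_exp_add_mul_dslope (hf : IsRealSectorial f φ) (hφ₀ : 0 < φ)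
    (hφ₁ : φ < π) (hp : 0 < p) :
    Tendsto (fun R : ℝ => (∫ x in -R..R,
      Complex.exp (x + φ * I) * dslope f p (Complex.exp (x + φ * I))).im) atTop
      (𝓝 (-(rayIntegral (fun s => f s / (p - s)) φ).im - (f p).re * (φ - π))) := by
  have hint := hf.integrableOn_div_sub (sin_pos_of_pos_of_lt_pi hφ₀ hφ₁) hp
  have hray := (Complex.continuous_im.tendsto _).comp
    (tendsto_integral_exp_rayIntegral (f := fun s => f s / (p - s)) hint)
  simpa only [hf.im_intervalIntegral_exp_add_mul_dslope hφ₀ hφ₁ hp, Function.comp_apply]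
    using hray.neg.sub ((tendsto_im_intervalIntegral_exp_div_sub hφ₀ hφ₁ hp).const_mul (f p).re)

-- Cauchy's theorem applies to `dslope f p`, which has no pole at `p`; the subtracted pole
-- contributes the change of argument of `p - s` along the ray, which is `φ - π`.
theorem im_rayIntegral_div_sub (hf : IsRealSectorial f φ) (hφ₀ : 0 < φ) (hφ₁ : φ < π)
    (hp : 0 < p) :
    (rayIntegral (fun s => f s / (p - s)) φ).im = π * (f p).re := by
  have hφ : |φ| < π := by rwa [abs_of_pos hφ₀]
  have hp' : (p : ℂ) ≠ 0 := Complex.ofReal_ne_zero.2 hp.ne'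
  have hdslope : DifferentiableOn ℂ (dslope f p) slitPlane :=
    (Complex.differentiableOn_dslope
      (Complex.isOpen_slitPlane.mem_nhds (Complex.ofReal_mem_slitPlane.2 hp))).2 hf.differentiableOn
  have hdiff := tendsto_integral_exp_horizontal_sub hφ hdslope
    (tendsto_mul_dslope_cobounded hf.tendsto_cobounded p)
    (tendsto_mul_dslope_zero hf.tendsto_mul_zero hp')
  have him := (Complex.continuous_im.tendsto _).comp hdiff
  simp only [Function.comp_def, Complex.sub_im, hf.im_intervalIntegral_exp_mul_dslope hp,
    sub_zero] at him
  have hunique := tendsto_nhds_unique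
    (hf.tendsto_im_intervalIntegral_exp_add_mul_dslope hφ₀ hφ₁ hp) him
  rw [Complex.I_mul_im, Complex.re_ofReal_mul, Complex.neg_re] at hunique
  linarith

theorem integrable_laplace_kernel (hf : IsRealSectorial f φ) (hφ : cos φ ≤ 0) (hp : 0 < p) :
    Integrable (Function.uncurry fun t r : ℝ => Complex.exp (φ * I) *
        (Complex.exp (t * (r * Complex.exp (φ * I))) *
          ((rexp (-p * t) : ℝ) * f (r * Complex.exp (φ * I)))))
      ((volume.restrict (Ioi 0)).prod (volume.restrict (Ioi 0))) := by
  have hprod := Integrable.mul_prod (integrableOn_exp_mul_Ioi (neg_neg_of_pos hp) 0).ofReal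
    hf.integrableOn_ray
  refine (hprod.bdd_mul (c := 1) (by fun_prop) ?_).const_mul _
  rw [Measure.prod_restrict]
  filter_upwards [ae_restrict_mem (measurableSet_Ioi.prod measurableSet_Ioi)] with q hq
  rw [Complex.norm_exp, Complex.re_ofReal_mul, re_ofReal_mul_exp, exp_le_one_iff]
  exact mul_nonpos_of_nonneg_of_nonpos hq.1.le (mul_nonpos_of_nonneg_of_nonpos hq.2.le hφ)

theorem integral_exp_neg_mul_im_rayIntegral (hf : IsRealSectorial f φ) (hφ₀ : π / 2 ≤ φ)
    (hφ₁ : φ < π) (hp : 0 < p) :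
    ∫ t in Ioi (0 : ℝ), rexp (-p * t) * (rayIntegral (fun s => Complex.exp (t * s) * f s) φ).im =
      π * (f p).re := by
  have hcos : cos φ ≤ 0 := cos_nonpos_of_pi_div_two_le_of_le hφ₀ (by linarith)
  have hK := hf.integrable_laplace_kernel hcos hp
  have hinner : ∀ t : ℝ,
      rexp (-p * t) * (rayIntegral (fun s => Complex.exp (t * s) * f s) φ).im =
      Complex.imCLM (∫ r in Ioi (0 : ℝ), Complex.exp (φ * I) *
        (Complex.exp (t * (r * Complex.exp (φ * I))) *
          ((rexp (-p * t) : ℝ) * f (r * Complex.exp (φ * I))))) := fun t => by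
    rw [rayIntegral, ← Complex.im_ofReal_mul, ← integral_const_mul, Complex.imCLM_apply]
    congr 2 with r
    ring
  have hleft := hK.integral_prod_left
  simp only [Function.uncurry_apply_pair] at hleft
  simp only [hinner]
  rw [Complex.imCLM.integral_comp_comm hleft, integral_integral_swap hK,
    setIntegral_congr_fun measurableSet_Ioi fun r hr => integral_laplace_kernel hr hcos hp _ _]
  exact hf.im_rayIntegral_div_sub (pi_div_two_pos.trans_le hφ₀) hφ₁ hp

end IsRealSectorial

section StretchedExponential

variable {δ c φ : ℝ}

theorem norm_exp_neg_mul_cpow_le (hc : 0 ≤ c) (hδφ : |δ * φ| ≤ π) {s : ℂ} (hs : s ∈ sector φ) :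
    ‖Complex.exp (-c * s ^ (δ : ℂ))‖ ≤ rexp (-(c * cos (δ * φ)) * ‖s‖ ^ δ) := by
  have hcos : cos (δ * φ) ≤ cos (s.arg * δ) := by
    refine cos_le_cos_of_abs_le ?_ hδφ
    rw [mul_comm, abs_mul, abs_mul]
    exact mul_le_mul_of_nonneg_left (abs_le_of_mem_uIcc_zero hs) (abs_nonneg δ)
  rw [Complex.norm_exp, exp_le_exp, ← Complex.ofReal_neg, Complex.re_ofReal_mul,
    Complex.cpow_ofReal_re]
  linarith [mul_le_mul_of_nonneg_left hcos (mul_nonneg hc (rpow_nonneg (norm_nonneg s) δ))]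

theorem isRealSectorial_exp_neg_mul_cpow (hδ : 0 < δ) (hc : 0 < c) (hφ : |φ| < π)
    (hδφ : |δ * φ| < π / 2) :
    IsRealSectorial (fun s => Complex.exp (-c * s ^ (δ : ℂ))) φ := by
  have hrate : 0 < c * cos (δ * φ) := mul_pos hc (cos_pos_of_mem_Ioo (abs_lt.1 hδφ))
  have hbound : ∀ s ∈ sector φ,
      ‖Complex.exp (-c * s ^ (δ : ℂ))‖ ≤ rexp (-(c * cos (δ * φ)) * ‖s‖ ^ δ) := fun s hs =>
    norm_exp_neg_mul_cpow_le hc.le (by linarith [pi_pos]) hs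
  refine ⟨?_, fun x hx => ?_, ?_, ?_, ?_⟩
  · exact ((differentiableOn_id.cpow_const fun s hs => hs).const_mul (-c : ℂ)).cexp
  · rw [← Complex.ofReal_cpow hx.le, ← Complex.ofReal_neg, ← Complex.ofReal_mul,
      ← Complex.ofReal_exp, Complex.ofReal_re]
  · refine squeeze_zero_norm' ?_ (tendsto_norm_zero.mono_left nhdsWithin_le_nhds)
    filter_upwards [self_mem_nhdsWithin] with s hs
    rw [norm_mul]
    refine mul_le_of_le_one_right (norm_nonneg s) ((hbound s hs).trans (exp_le_one_iff.2 ?_))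
    exact mul_nonpos_of_nonpos_of_nonneg (neg_nonpos.2 hrate.le) (rpow_nonneg (norm_nonneg s) δ)
  · have hdecay : Tendsto (fun s : ℂ => rexp (-(c * cos (δ * φ)) * ‖s‖ ^ δ)) (cobounded ℂ)
        (𝓝 0) :=
      tendsto_exp_atBot.comp (((tendsto_rpow_atTop hδ).comp
        tendsto_norm_cobounded_atTop).const_mul_atTop_of_neg (neg_neg_of_pos hrate))
    refine squeeze_zero_norm' ?_ (hdecay.mono_left inf_le_left)
    exact mem_inf_of_right hbound
  · have hdominant := integrableOn_rpow_mul_exp_neg_mul_rpow neg_one_lt_zero hδ hrate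
    refine hdominant.mono' (Measurable.aestronglyMeasurable (by fun_prop)) ?_
    filter_upwards [ae_restrict_mem measurableSet_Ioi] with r hr
    have hle := hbound _ (ofReal_mul_exp_mem_sector hφ hr right_mem_uIcc)
    rw [norm_ofReal_mul_exp hr.le] at hle
    rwa [rpow_zero, one_mul]

end StretchedExponential

section Gamma

variable {ν t φ : ℝ}

theorem ofReal_mul_exp_cpow {r θ : ℝ} (hr : 0 < r) (hθ₀ : -π < θ) (hθ₁ : θ ≤ π) (ν : ℝ) :
    ((r : ℂ) * Complex.exp (θ * I)) ^ (ν : ℂ) = (r ^ ν : ℝ) * Complex.exp ((ν * θ : ℝ) * I) := by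
  have hlog : Complex.log (r * Complex.exp (θ * I)) = (log r : ℝ) + θ * I := by
    rw [Complex.log_ofReal_mul hr (Complex.exp_ne_zero _), Complex.log_exp (by simpa) (by simpa)]
  rw [Complex.cpow_def_of_ne_zero
    (mul_ne_zero (Complex.ofReal_ne_zero.2 hr.ne') (Complex.exp_ne_zero _)), hlog,
    rpow_def_of_pos hr, Complex.ofReal_exp, ← Complex.exp_add]
  push_cast
  ring_nf

theorem norm_cpow_mul_exp_neg_le (ht : 0 ≤ t) (hφ : |φ| ≤ π) {s : ℂ} (hs : s ∈ sector φ) :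
    ‖s ^ (ν : ℂ) * Complex.exp (-(t * s))‖ ≤ ‖s‖ ^ ν * rexp (-(t * cos φ) * ‖s‖) := by
  have hre : ‖s‖ * cos φ ≤ s.re := by
    rw [← Complex.norm_mul_cos_arg s]
    exact mul_le_mul_of_nonneg_left (cos_le_cos_of_abs_le (abs_le_of_mem_uIcc_zero hs) hφ)
      (norm_nonneg s)
  rw [norm_mul, Complex.norm_cpow_real, Complex.norm_exp, Complex.neg_re, Complex.re_ofReal_mul]
  gcongr
  linarith [mul_le_mul_of_nonneg_left hre ht]

theorem tendsto_mul_cpow_mul_exp_neg (hν : -1 < ν) (ht : 0 ≤ t) (hφ : |φ| ≤ π) {l : Filter ℂ}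
    (hl : Tendsto (fun s : ℂ => ‖s‖ ^ (ν + 1) * rexp (-(t * cos φ) * ‖s‖)) l (𝓝 0)) :
    Tendsto (fun s : ℂ => s * (s ^ (ν : ℂ) * Complex.exp (-(t * s)))) (l ⊓ 𝓟 (sector φ)) (𝓝 0) := by
  refine squeeze_zero_norm' (mem_inf_of_right fun s hs => ?_) (hl.mono_left inf_le_left)
  change ‖_‖ ≤ _
  rw [norm_mul, add_comm, rpow_one_add' (norm_nonneg s) (by linarith), mul_assoc]
  exact mul_le_mul_of_nonneg_left (norm_cpow_mul_exp_neg_le ht hφ hs) (norm_nonneg s)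

theorem integrableOn_ray_cpow_mul_exp_neg (hν : -1 < ν) (ht : 0 < t) (hφ : |φ| < π / 2) :
    IntegrableOn (fun r : ℝ => (r * Complex.exp (φ * I)) ^ (ν : ℂ) *
      Complex.exp (-(t * (r * Complex.exp (φ * I))))) (Ioi 0) := by
  have hcos : 0 < cos φ := cos_pos_of_mem_Ioo (abs_lt.1 hφ)
  have hφπ : |φ| < π := hφ.trans (half_lt_self pi_pos)
  have hdominant := integrableOn_rpow_mul_exp_neg_mul_rpow hν one_pos (mul_pos ht hcos)
  refine hdominant.mono' (Measurable.aestronglyMeasurable (by fun_prop)) ?_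
  filter_upwards [ae_restrict_mem measurableSet_Ioi] with r hr
  have hle := norm_cpow_mul_exp_neg_le (ν := ν) ht.le hφπ.le
    (ofReal_mul_exp_mem_sector hφπ hr right_mem_uIcc)
  rw [norm_ofReal_mul_exp hr.le] at hle
  rwa [rpow_one]

theorem rayIntegral_zero_cpow_mul_exp_neg (hν : -1 < ν) (ht : 0 < t) :
    rayIntegral (fun s => s ^ (ν : ℂ) * Complex.exp (-(t * s))) 0 =
      (Gamma (ν + 1) / t ^ (ν + 1) : ℝ) := by
  have hgamma := integral_rpow_mul_exp_neg_mul_Ioi (a := ν + 1) (by linarith) ht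
  rw [add_sub_cancel_right, one_div, inv_rpow ht.le, inv_mul_eq_div] at hgamma
  rw [← hgamma, ← integral_complex_ofReal, rayIntegral]
  refine setIntegral_congr_fun measurableSet_Ioi fun r hr => ?_
  simp only [Complex.ofReal_zero, zero_mul, Complex.exp_zero, mul_one, one_mul]
  rw [Complex.ofReal_mul, Complex.ofReal_cpow (le_of_lt hr), Complex.ofReal_exp]
  push_cast
  rfl

theorem rayIntegral_cpow_mul_exp_neg (hν : -1 < ν) (ht : 0 < t) (hφ : |φ| < π / 2) :
    rayIntegral (fun s => s ^ (ν : ℂ) * Complex.exp (-(t * s))) φ =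
      (Gamma (ν + 1) / t ^ (ν + 1) : ℝ) := by
  have hφπ : |φ| < π := hφ.trans (half_lt_self pi_pos)
  have hrate : 0 < t * cos φ := mul_pos ht (cos_pos_of_mem_Ioo (abs_lt.1 hφ))
  have hinfty : Tendsto (fun s : ℂ => ‖s‖ ^ (ν + 1) * rexp (-(t * cos φ) * ‖s‖)) (cobounded ℂ)
      (𝓝 0) :=
    (tendsto_rpow_mul_exp_neg_mul_atTop_nhds_zero (ν + 1) _ hrate).comp
      tendsto_norm_cobounded_atTop
  have hzero : Tendsto (fun s : ℂ => ‖s‖ ^ (ν + 1) * rexp (-(t * cos φ) * ‖s‖)) (𝓝 0)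
      (𝓝 0) := by
    have hcont : Continuous fun s : ℂ => ‖s‖ ^ (ν + 1) * rexp (-(t * cos φ) * ‖s‖) :=
      (continuous_norm.rpow_const fun s => Or.inr (by linarith)).mul (by fun_prop)
    simpa [zero_rpow (by linarith : ν + 1 ≠ 0)] using hcont.tendsto 0
  rw [← rayIntegral_zero_cpow_mul_exp_neg hν ht]
  refine rayIntegral_eq_rayIntegral_zero hφπ ?_
    (tendsto_mul_cpow_mul_exp_neg hν ht.le hφπ.le hinfty)
    (tendsto_mul_cpow_mul_exp_neg hν ht.le hφπ.le hzero)
    (integrableOn_ray_cpow_mul_exp_neg hν ht hφ) ?_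
  · exact (differentiableOn_id.cpow_const fun s hs => hs).mul (by fun_prop)
  · simpa using integrableOn_ray_cpow_mul_exp_neg (φ := 0) hν ht (by simpa using pi_pos)

-- The substitution `s ↦ -s` carries the ray into the right half plane.
theorem rayIntegral_cpow_mul_exp (hν : -1 < ν) (ht : 0 < t) (hφ₀ : π / 2 < φ) (hφ₁ : φ ≤ π) :
    rayIntegral (fun s => s ^ (ν : ℂ) * Complex.exp (t * s)) φ =
      (Gamma (ν + 1) / t ^ (ν + 1) : ℝ) * Complex.exp ((π * (ν + 1) : ℝ) * I) := by
  have hψ : |φ - π| < π / 2 := abs_lt.2 ⟨by linarith, by linarith [pi_pos]⟩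
  have hturn : Complex.exp (φ * I) = -Complex.exp ((φ - π : ℝ) * I) := by
    rw [Complex.ofReal_sub, sub_mul, Complex.exp_sub_pi_mul_I, neg_neg]
  rw [← rayIntegral_cpow_mul_exp_neg hν ht hψ, rayIntegral, rayIntegral, ← integral_mul_const]
  refine setIntegral_congr_fun measurableSet_Ioi fun r hr => ?_
  have hphase : Complex.exp ((ν * φ : ℝ) * I) =
      -(Complex.exp ((ν * (φ - π) : ℝ) * I) * Complex.exp ((π * (ν + 1) : ℝ) * I)) := by
    rw [← Complex.exp_add, ← Complex.exp_sub_pi_mul_I]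
    push_cast
    ring_nf
  simp only [ofReal_mul_exp_cpow hr (by linarith [pi_pos] : -π < φ) hφ₁,
    ofReal_mul_exp_cpow hr (by linarith : -π < φ - π) (by linarith), hphase]
  rw [hturn]
  ring_nf

-- At positive integers both sides are `0`, as `Gamma` takes the value `0` at its poles.
theorem Gamma_mul_sin {s : ℝ} (hs : 0 < s) : Gamma s * sin (π * s) = π / Gamma (1 - s) := by
  have hinv := congrArg Inv.inv (Gamma_mul_Gamma_one_sub s)
  rw [mul_inv, inv_div, inv_mul_eq_iff_eq_mul₀ (Gamma_pos_of_pos hs).ne'] at hinv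
  rw [div_eq_mul_inv, hinv]
  field_simp

theorem im_rayIntegral_cpow_mul_exp (hν : -1 < ν) (ht : 0 < t) (hφ₀ : π / 2 < φ) (hφ₁ : φ ≤ π) :
    (rayIntegral (fun s => s ^ (ν : ℂ) * Complex.exp (t * s)) φ).im =
      π / (Gamma (-ν) * t ^ (ν + 1)) := by
  have hreflect := Gamma_mul_sin (s := ν + 1) (by linarith)
  rw [sub_add_cancel_right] at hreflect
  rw [rayIntegral_cpow_mul_exp hν ht hφ₀ hφ₁, im_ofReal_mul_exp, div_mul_eq_mul_div, hreflect,
    div_div]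

end Gamma

section Series

variable {δ c t φ : ℝ}

theorem integrableOn_exp_mul_rpow_mul_exp_neg_mul {k : ℝ} (c : ℝ) (hδ₀ : 0 ≤ δ) (hδ₁ : δ < 1)
    (hk : 0 < k) :
    IntegrableOn (fun r : ℝ => rexp (c * r ^ δ) * rexp (-k * r)) (Ioi 0) := by
  refine integrable_of_isBigO_exp_neg (half_pos hk) ?_ (Asymptotics.IsBigO.of_bound 1 ?_)
  · have : Continuous fun r : ℝ => r ^ δ := continuous_rpow_const hδ₀
    exact Continuous.continuousOn (by fun_prop)
  · have hlim := (tendsto_rpow_neg_atTop (sub_pos.2 hδ₁)).const_mul c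
    rw [mul_zero] at hlim
    filter_upwards [hlim.eventually_le_const (half_pos hk), eventually_gt_atTop 0] with r hr hr0
    have hpow : r ^ δ = r ^ (-(1 - δ)) * r := by
      rw [← rpow_add_one hr0.ne']
      ring_nf
    rw [← exp_add, norm_of_nonneg (exp_pos _).le, norm_of_nonneg (exp_pos _).le, one_mul,
      exp_le_exp, hpow]
    linarith [mul_le_mul_of_nonneg_right hr hr0.le]

theorem hasSum_ray_integrand (c : ℝ) (δ : ℝ) (a b s : ℂ) :
    HasSum (fun n : ℕ => ((-c) ^ n / n.factorial : ℝ) * (a * (s ^ ((δ * n : ℝ) : ℂ) * b)))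
      (a * (b * Complex.exp (-c * s ^ (δ : ℂ)))) := by
  have hexp : HasSum (fun n : ℕ => (-c * s ^ (δ : ℂ)) ^ n / n.factorial)
      (Complex.exp (-c * s ^ (δ : ℂ))) := by
    rw [Complex.exp_eq_exp_ℂ]
    exact NormedSpace.expSeries_div_hasSum_exp _
  refine ((hexp.mul_left b).mul_left a).congr_fun fun n => ?_
  rw [mul_pow, ← Complex.cpow_mul_nat]
  push_cast
  ring

theorem hasSum_rayIntegral_exp_mul_exp_cpow (c : ℝ) (hδ₀ : 0 ≤ δ) (hδ₁ : δ < 1) (ht : 0 < t)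
    (hφ : cos φ < 0) :
    HasSum (fun n : ℕ => ((-c) ^ n / n.factorial : ℝ) *
        rayIntegral (fun s => s ^ ((δ * n : ℝ) : ℂ) * Complex.exp (t * s)) φ)
      (rayIntegral (fun s => Complex.exp (t * s) * Complex.exp (-c * s ^ (δ : ℂ))) φ) := by
  have hmajorant : ∀ r : ℝ, HasSum
      (fun n : ℕ => (|c| * r ^ δ) ^ n / n.factorial * rexp (-(t * -cos φ) * r))
      (rexp (|c| * r ^ δ) * rexp (-(t * -cos φ) * r)) := fun r => by
    have hexp := NormedSpace.expSeries_div_hasSum_exp (|c| * r ^ δ)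
    rw [← exp_eq_exp_ℝ] at hexp
    exact hexp.mul_right _
  simp only [rayIntegral, ← integral_const_mul]
  refine hasSum_integral_of_dominated_convergence
    (fun n r => (|c| * r ^ δ) ^ n / n.factorial * rexp (-(t * -cos φ) * r))
    (fun n => Measurable.aestronglyMeasurable (by fun_prop)) (fun n => ?_)
    (ae_of_all _ fun r => (hmajorant r).summable) ?_
    (ae_of_all _ fun r => hasSum_ray_integrand c δ _ _ _)
  · filter_upwards [ae_restrict_mem measurableSet_Ioi] with r hr
    rw [norm_mul, norm_mul, norm_mul, Complex.norm_exp_ofReal_mul_I, Complex.norm_cpow_real,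
      norm_ofReal_mul_exp (le_of_lt hr), Complex.norm_exp, Complex.re_ofReal_mul,
      re_ofReal_mul_exp, Complex.norm_real, norm_div, norm_pow, norm_neg, norm_natCast,
      rpow_mul_natCast (le_of_lt hr), mul_pow]
    apply le_of_eq
    rw [norm_eq_abs]
    ring_nf
  · simp only [fun r => (hmajorant r).tsum_eq]
    exact integrableOn_exp_mul_rpow_mul_exp_neg_mul |c| hδ₀ hδ₁ (mul_pos ht (neg_pos.2 hφ))

theorem hasSum_im_rayIntegral_exp_mul_exp_cpow (c : ℝ) (hδ₀ : 0 ≤ δ) (hδ₁ : δ < 1) (ht : 0 < t)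
    (hφ₀ : π / 2 < φ) (hφ₁ : φ ≤ π) :
    HasSum (fun n : ℕ => (-c) ^ n / n.factorial * (π / (Gamma (-(δ * n)) * t ^ (δ * n + 1))))
      (rayIntegral (fun s => Complex.exp (t * s) * Complex.exp (-c * s ^ (δ : ℂ))) φ).im := by
  have hcos : cos φ < 0 := cos_neg_of_pi_div_two_lt_of_lt hφ₀ (by linarith [pi_pos])
  have hsum := Complex.imCLM.hasSum (hasSum_rayIntegral_exp_mul_exp_cpow c hδ₀ hδ₁ ht hcos)
  refine hsum.congr_fun fun n => ?_
  have hν : -1 < δ * n := neg_one_lt_zero.trans_le (by positivity)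
  rw [Complex.imCLM_apply, Complex.im_ofReal_mul, im_rayIntegral_cpow_mul_exp hν ht hφ₀ hφ₁]

theorem wright_density_eq_im_rayIntegral (c : ℝ) (hδ₀ : 0 < δ) (hδ₁ : δ < 1) (ht : 0 < t)
    (hφ₀ : π / 2 < φ) (hφ₁ : φ ≤ π) :
    c * δ / t ^ (δ + 1) * Mwr (c / t ^ δ) δ =
      π⁻¹ * (rayIntegral (fun s => Complex.exp (t * s) * Complex.exp (-c * s ^ (δ : ℂ))) φ).im := by
  have hsum := hasSum_im_rayIntegral_exp_mul_exp_cpow c hδ₀.le hδ₁ ht hφ₀ hφ₁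
  rw [← hasSum_nat_add_iff' 1] at hsum
  simp only [Finset.sum_range_one, Nat.cast_zero, mul_zero, neg_zero, Gamma_zero, zero_mul,
    div_zero, sub_zero] at hsum
  rw [Mwr, ← tsum_mul_left, ← (hsum.mul_left π⁻¹).tsum_eq]
  refine tsum_congr fun m => ?_
  have hgamma : Gamma (-δ * m + 1 - δ) = -(δ * (m + 1 : ℕ)) * Gamma (-(δ * (m + 1 : ℕ))) := by
    rw [← Gamma_add_one (neg_ne_zero.2 (by positivity))]
    push_cast
    ring_nf
  have hpow : t ^ (δ * (m + 1 : ℕ) + 1) = t ^ (δ + 1) * (t ^ δ) ^ m := by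
    rw [← rpow_natCast (t ^ δ), ← rpow_mul ht.le, ← rpow_add ht]
    push_cast
    ring_nf
  rw [hgamma, hpow, Nat.factorial_succ, pow_succ, ← neg_div, div_pow]
  have htδ : t ^ (δ + 1) ≠ 0 := (rpow_pos_of_pos ht (δ + 1)).ne'
  push_cast
  field_simp

theorem exists_angle_mul_lt_pi_div_two (hδ₀ : 0 < δ) (hδ₁ : δ < 1) :
    ∃ φ : ℝ, π / 2 < φ ∧ φ < π ∧ δ * φ < π / 2 := by
  refine ⟨π / (1 + δ), ?_, ?_, ?_⟩
  · gcongr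
    linarith
  · exact div_lt_self pi_pos (by linarith)
  · rw [mul_div_assoc', div_lt_iff₀ (by linarith)]
    nlinarith [pi_pos]

end Series

/-- Laplace transform of the Wright M-density:
`L{ (cδ/t^{δ+1}) M(c/t^δ; δ) }(p) = exp(−c p^δ)` for `0 < δ < 1`, `c > 0`, `p > 0`. -/
theorem laplace_wright_M_density (δ c p : ℝ) (hδ₁ : 0 < δ) (hδ₂ : δ < 1)
    (hc : 0 < c) (hp : 0 < p) :
    ∫ t in Ioi (0 : ℝ), Real.exp (-p * t) *
        ((c * δ / t ^ (δ + 1)) * Mwr (c / t ^ δ) δ) =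
      Real.exp (-c * p ^ δ) := by
  obtain ⟨φ, hφ₀, hφ₁, hδφ⟩ := exists_angle_mul_lt_pi_div_two hδ₁ hδ₂
  have hφ : 0 < φ := pi_div_two_pos.trans hφ₀
  have hf : IsRealSectorial (fun s => Complex.exp (-c * s ^ (δ : ℂ))) φ :=
    isRealSectorial_exp_neg_mul_cpow hδ₁ hc (by rwa [abs_of_pos hφ])
      (by rwa [abs_of_pos (mul_pos hδ₁ hφ)])
  have hvalue : (Complex.exp (-c * (p : ℂ) ^ (δ : ℂ))).re = rexp (-c * p ^ δ) := by
    rw [← Complex.ofReal_cpow hp.le, ← Complex.ofReal_neg, ← Complex.ofReal_mul,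
      Complex.exp_ofReal_re]
  have hinversion := hf.integral_exp_neg_mul_im_rayIntegral hφ₀.le hφ₁ hp
  have hdensity : ∀ t ∈ Ioi (0 : ℝ), rexp (-p * t) * (c * δ / t ^ (δ + 1) * Mwr (c / t ^ δ) δ) =
      π⁻¹ * (rexp (-p * t) *
        (rayIntegral (fun s => Complex.exp (t * s) * Complex.exp (-c * s ^ (δ : ℂ))) φ).im) :=
    fun t ht => by rw [wright_density_eq_im_rayIntegral c hδ₁ hδ₂ ht hφ₀ hφ₁.le, mul_left_comm]
  rw [setIntegral_congr_fun measurableSet_Ioi hdensity, integral_const_mul, hinversion, hvalue,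
    inv_mul_cancel_left₀ pi_ne_zero]
end

section
/- Lemma part (b) (equation (2.15)). Let 0 < 2β < 1, c > 0, k ≥ 0 and p > 0. Then ∫_0^∞ e^{−pt} [ (βc/(√π·t^{2β+1})) ∫_0^∞ u^{−1/2}·exp(−c²/(4u))·exp(−k²u)·M(u/t^{2β}; 2β) du ] dt = exp(−c·√(p^{2β} + k²)). (The paper's statement is the case c = (z+ατ)/a, k = λ/(2a) with z, τ ≥ 0, a, λ > 0.) -/
open MeasureTheory Real Filter Set

/-!
For `0 < δ < 1` the function `t ↦ δ u t ^ (-δ - 1) M(u / t ^ δ; δ)` is the one-sided `δ`-stable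
density at time `u`. To see this, invert `exp (-u p ^ δ)` along the imaginary axis and expand the
second exponential in `∫₀^∞ exp (i t ω) exp (-u (i ω) ^ δ) dω` in powers of `u`. The termwise
Gamma integrals diverge on the axis, so `-i t` is replaced by `a` with `0 < re a`, and both sides
are continuous up to the boundary. By the reflection formula the real parts of the resulting terms
are those of the Wright series.

Since `re ((i ω) ^ δ) = cos (δ π / 2) |ω| ^ δ` with a positive constant, the inversion integral
converges absolutely. Fubini and Cauchy's formula for the half-plane, which is the mean value
property on the disc transported by the Cayley transform, then give the Laplace transform
`exp (-u p ^ δ)` of the density in `t`.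

In the theorem the remaining factor in `u` is the Lévy density, of Laplace transform
`s ↦ exp (-c √s)`, times `exp (-k ^ 2 u)`. Exchanging the two integrals evaluates that transform at
`s = p ^ (2 β) + k ^ 2`.
-/

open ProbabilityTheory (complexMGF integrableExpSet)
open Bornology (cobounded)
open Complex (I)
open scoped Topology Complex ComplexConjugate

/-! ### Laplace integrals with a stretched exponential -/

theorem eqOn_re_pos_of_eqOn_ofReal {f g : ℂ → ℂ} (hf : DifferentiableOn ℂ f {z | 0 < z.re})
    (hg : DifferentiableOn ℂ g {z | 0 < z.re}) (hfg : ∀ x : ℝ, 0 < x → f x = g x) :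
    EqOn f g {z | 0 < z.re} := by
  have hU : IsOpen {z : ℂ | 0 < z.re} := isOpen_lt continuous_const Complex.continuous_re
  refine (hf.analyticOnNhd hU).eqOn_of_preconnected_of_frequently_eq (hg.analyticOnNhd hU)
    (convex_halfSpace_re_gt 0).isPreconnected (z₀ := ((1 : ℝ) : ℂ)) (by simp) ?_
  have h_inj : Tendsto ((↑) : ℝ → ℂ) (𝓝[≠] 1) (𝓝[≠] ((1 : ℝ) : ℂ)) :=
    Complex.continuous_ofReal.continuousAt.continuousWithinAt.tendsto_nhdsWithin
      fun x hx ↦ Complex.ofReal_injective.ne hx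
  refine h_inj.frequently (Eventually.frequently ?_)
  filter_upwards [nhdsWithin_le_nhds (Ioi_mem_nhds one_pos)] with x hx using hfg x hx

theorem integral_rpow_mul_cexp_neg_mul_Ioi {s : ℝ} {a : ℂ} (hs : 0 < s) (ha : 0 < a.re) :
    ∫ x in Ioi (0 : ℝ), (x ^ (s - 1) : ℝ) * cexp (-a * x) = a ^ ((-s : ℝ) : ℂ) * Gamma s := by
  let μ : Measure ℝ := (volume.restrict (Ioi 0)).withDensity fun x ↦ .ofReal (x ^ (s - 1))
  have mgf_eq (z : ℂ) :
      complexMGF Neg.neg μ z = ∫ x in Ioi (0 : ℝ), (x ^ (s - 1) : ℝ) * cexp (-z * x) := by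
    rw [complexMGF, integral_withDensity_eq_integral_toReal_smul (by fun_prop) (by simp)]
    refine setIntegral_congr_fun measurableSet_Ioi fun x (hx : 0 < x) ↦ ?_
    simp [ENNReal.toReal_ofReal (rpow_nonneg hx.le _), Complex.real_smul]
  have pos_subset_expSet : Ioi 0 ⊆ integrableExpSet Neg.neg μ := by
    intro r (hr : 0 < r)
    rw [integrableExpSet, mem_ofPred,
      integrable_withDensity_iff_integrable_smul' (by fun_prop) (by simp)]
    refine IntegrableOn.congr_fun (integrableOn_rpow_mul_exp_neg_mul_rpow (s := s - 1)
      (by linarith) one_pos hr) (fun x (hx : 0 < x) ↦ ?_) measurableSet_Ioi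
    simp [ENNReal.toReal_ofReal (rpow_nonneg hx.le _)]
  rw [← mgf_eq]
  refine eqOn_re_pos_of_eqOn_ofReal (g := fun z ↦ z ^ ((-s : ℝ) : ℂ) * Gamma s)
    (ProbabilityTheory.differentiableOn_complexMGF.mono fun z hz ↦
      interior_maximal pos_subset_expSet isOpen_Ioi hz) ?_ (fun x hx ↦ ?_) ha
  · intro z hz
    have hz : z ∈ Complex.slitPlane := .inl hz
    exact ((differentiableAt_id.cpow_const hz).mul_const _).differentiableWithinAt
  · rw [mgf_eq]
    have key := Real.integral_rpow_mul_exp_neg_mul_Ioi hs hx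
    rw [one_div, inv_rpow hx.le, ← rpow_neg hx.le] at key
    rw [← Complex.ofReal_cpow hx.le]
    norm_cast
    simp only [neg_mul, key]

theorem mem_slitPlane_of_re_nonneg {z : ℂ} (hz : 0 ≤ z.re) (hz0 : z ≠ 0) :
    z ∈ Complex.slitPlane := by
  rw [Complex.mem_slitPlane_iff]
  by_contra! h
  exact hz0 (Complex.ext (le_antisymm h.1 hz) h.2)

theorem summable_pow_div_factorial_mul_Gamma {δ : ℝ} (hδ : 0 < δ) (hδ1 : δ < 1) (y : ℝ) :
    Summable fun n : ℕ ↦ y ^ n / n.factorial * Gamma (δ * n + 1) := by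
  have Gamma_le (n : ℕ) : Gamma (δ * n + 1) ≤ (n.factorial : ℝ) ^ δ := by
    have := Gamma_mul_add_mul_le_rpow_Gamma_mul_rpow_Gamma (s := n + 1) (by positivity) one_pos
      hδ (sub_pos.2 hδ1) (by ring)
    rw [Gamma_one, one_rpow, mul_one (_ ^ δ), Gamma_nat_eq_factorial] at this
    convert this using 2
    ring
  have bound_summable : Summable fun n : ℕ ↦ |y| ^ n * (n.factorial : ℝ) ^ (δ - 1) := by
    have hδ' : 0 < 1 - δ := sub_pos.2 hδ1
    let r : ℝ := (2 * |y|) ^ (1 - δ)⁻¹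
    have hr : r ^ (1 - δ) = 2 * |y| := rpow_inv_rpow (by positivity) hδ'.ne'
    refine ((summable_geometric_two).mul_left (rexp r ^ (1 - δ))).of_nonneg_of_le
      (fun n ↦ by positivity) fun n ↦ ?_
    calc |y| ^ n * (n.factorial : ℝ) ^ (δ - 1)
        = (r ^ n / n.factorial) ^ (1 - δ) * (1 / 2) ^ n := by
          rw [div_rpow (by positivity) (by positivity), ← rpow_natCast_mul (by positivity),
            mul_comm (n : ℝ), rpow_mul_natCast (by positivity), hr, ← neg_sub 1 δ,
            rpow_neg (by positivity), mul_pow]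
          field_simp
          rw [mul_assoc, ← mul_pow, mul_one_div_cancel two_ne_zero, one_pow, mul_one]
      _ ≤ rexp r ^ (1 - δ) * (1 / 2) ^ n := by
          gcongr
          exact pow_div_factorial_le_exp r (by positivity) n
  refine bound_summable.of_norm_bounded fun n ↦ ?_
  rw [norm_mul, norm_div, norm_pow, Real.norm_natCast, Real.norm_eq_abs,
    Real.norm_of_nonneg (Gamma_nonneg_of_nonneg (by positivity)), rpow_sub_one (by positivity),
    div_mul_eq_mul_div, mul_div_assoc']
  gcongr
  exact Gamma_le n

theorem integrableOn_rpow_mul_cexp_neg_mul {s : ℝ} {a : ℂ} (hs : -1 < s) (ha : 0 < a.re) :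
    IntegrableOn (fun x : ℝ ↦ (x ^ s : ℝ) * cexp (-a * x)) (Ioi 0) := by
  refine (integrableOn_rpow_mul_exp_neg_mul_rpow hs one_pos ha).mono' (by fun_prop) ?_
  refine ae_restrict_of_forall_mem measurableSet_Ioi fun x (hx : 0 < x) ↦ ?_
  simp [Complex.norm_exp, abs_of_nonneg (rpow_nonneg hx.le s)]

theorem integral_norm_rpow_mul_cexp_neg_mul_Ioi {s : ℝ} {a : ℂ} (hs : 0 < s) (ha : 0 < a.re) :
    ∫ x in Ioi (0 : ℝ), ‖(x ^ (s - 1) : ℝ) * cexp (-a * x)‖ = a.re ^ (-s) * Gamma s := by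
  have key := Real.integral_rpow_mul_exp_neg_mul_Ioi hs ha
  rw [one_div, inv_rpow ha.le, ← rpow_neg ha.le] at key
  rw [← key]
  refine setIntegral_congr_fun measurableSet_Ioi fun x (hx : 0 < x) ↦ ?_
  simp [Complex.norm_exp, abs_of_nonneg (rpow_nonneg hx.le _)]

/-- The `n`-th term of the expansion of `∫₀^∞ exp (-a x) exp (-b x ^ δ) dx` in powers of `b`. -/
noncomputable def laplaceTerm (δ : ℝ) (a b : ℂ) (n : ℕ) : ℂ :=
  (-b) ^ n / n.factorial * (a ^ ((-(δ * n + 1) : ℝ) : ℂ) * Gamma (δ * n + 1))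

section LaplaceTerm

variable {δ : ℝ} {a : ℂ}

theorem norm_laplaceTerm (hδ : 0 ≤ δ) (a b : ℂ) (n : ℕ) :
    ‖laplaceTerm δ a b n‖ =
      ‖b‖ ^ n / n.factorial * (‖a‖ ^ (-(δ * n + 1)) * Gamma (δ * n + 1)) := by
  rw [laplaceTerm, norm_mul, norm_mul, Complex.norm_cpow_real, norm_div, norm_pow, norm_neg,
    Complex.norm_natCast, Complex.norm_real,
    norm_of_nonneg (Gamma_nonneg_of_nonneg (by positivity))]

theorem norm_laplaceTerm_anti (hδ : 0 ≤ δ) {a a' : ℂ} (ha : a ≠ 0) (haa' : ‖a‖ ≤ ‖a'‖) (b : ℂ)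
    (n : ℕ) : ‖laplaceTerm δ a' b n‖ ≤ ‖laplaceTerm δ a b n‖ := by
  have hn : 0 < δ * n + 1 := by positivity
  have rpow_le := rpow_le_rpow_of_nonpos (norm_pos_iff.2 ha) haa' (neg_nonpos.2 hn.le)
  have := (Gamma_pos_of_pos hn).le
  rw [norm_laplaceTerm hδ, norm_laplaceTerm hδ]
  gcongr

theorem summable_norm_laplaceTerm (hδ : 0 < δ) (hδ1 : δ < 1) (ha : a ≠ 0) (b : ℂ) :
    Summable fun n ↦ ‖laplaceTerm δ a b n‖ := by
  have ha : 0 < ‖a‖ := norm_pos_iff.2 ha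
  refine ((summable_pow_div_factorial_mul_Gamma hδ hδ1
    (‖b‖ * ‖a‖ ^ (-δ))).mul_right ‖a‖⁻¹).congr fun n ↦ ?_
  rw [norm_laplaceTerm hδ.le, neg_add, rpow_add ha, rpow_neg_one, ← neg_mul,
    rpow_mul_natCast ha.le, mul_pow]
  ring

theorem tsum_laplaceTerm_of_re_pos (hδ : 0 < δ) (hδ1 : δ < 1) (ha : 0 < a.re) (b : ℂ) :
    ∑' n, laplaceTerm δ a b n =
      ∫ x in Ioi (0 : ℝ), cexp (-a * x) * cexp (-b * (x ^ δ : ℝ)) := by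
  let F (n : ℕ) (x : ℝ) : ℂ := (-b) ^ n / n.factorial * ((x ^ (δ * n) : ℝ) * cexp (-a * x))
  have h_pos (n : ℕ) : 0 < δ * n + 1 := by positivity
  have F_integral (n : ℕ) : ∫ x in Ioi (0 : ℝ), F n x = laplaceTerm δ a b n := by
    rw [integral_const_mul, laplaceTerm, ← integral_rpow_mul_cexp_neg_mul_Ioi (h_pos n) ha,
      add_sub_cancel_right]
  have F_integral_norm (n : ℕ) : ‖laplaceTerm δ a.re b n‖ = ∫ x in Ioi (0 : ℝ), ‖F n x‖ := by
    simp only [F, norm_mul (_ / _), integral_const_mul]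
    have key := integral_norm_rpow_mul_cexp_neg_mul_Ioi (h_pos n) ha
    rw [add_sub_cancel_right] at key
    rw [key, norm_laplaceTerm hδ.le, Complex.norm_real, norm_of_nonneg ha.le, norm_div, norm_pow,
      norm_neg, Complex.norm_natCast]
  have F_integrable (n : ℕ) : Integrable (F n) (volume.restrict (Ioi 0)) :=
    (integrableOn_rpow_mul_cexp_neg_mul (by linarith [h_pos n]) ha).const_mul _
  have F_summable : Summable fun n ↦ ∫ x in Ioi (0 : ℝ), ‖F n x‖ :=
    (summable_norm_laplaceTerm hδ hδ1 (Complex.ofReal_ne_zero.2 ha.ne') b).congr F_integral_norm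
  have F_sum (x : ℝ) (hx : 0 < x) :
      HasSum (F · x) (cexp (-a * x) * cexp (-b * (x ^ δ : ℝ))) := by
    rw [Complex.exp_eq_exp_ℂ]
    convert! (NormedSpace.expSeries_div_hasSum_exp (-b * (x ^ δ : ℝ))).mul_left
      (NormedSpace.exp (-a * x)) using 2 with n
    simp only [F]
    rw [Complex.exp_eq_exp_ℂ, mul_pow, ← Complex.ofReal_pow, ← rpow_mul_natCast hx.le]
    ring
  rw [← tsum_congr F_integral, integral_tsum_of_summable_integral_norm F_integrable F_summable]
  exact setIntegral_congr_fun measurableSet_Ioi fun x hx ↦ (F_sum x hx).tsum_eq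

theorem integrableOn_exp_neg_mul_rpow {κ : ℝ} (hδ : 0 < δ) (hκ : 0 < κ) :
    IntegrableOn (fun x ↦ rexp (-κ * x ^ δ)) (Ioi 0) := by
  simpa using integrableOn_rpow_mul_exp_neg_mul_rpow (s := 0) (by norm_num) hδ hκ

theorem continuousOn_tsum_laplaceTerm (hδ : 0 < δ) (hδ1 : δ < 1) {r : ℝ} (hr : 0 < r) (b : ℂ) :
    ContinuousOn (fun a ↦ ∑' n, laplaceTerm δ a b n) ({a | 0 ≤ a.re} ∩ {a | r ≤ ‖a‖}) := by
  have hr0 : (r : ℂ) ≠ 0 := Complex.ofReal_ne_zero.2 hr.ne'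
  refine continuousOn_tsum (fun n a ha ↦ ?_) (summable_norm_laplaceTerm hδ hδ1 hr0 b)
    fun n a ha ↦ ?_
  · have ha0 : a ≠ 0 := norm_pos_iff.1 (hr.trans_le ha.2)
    exact (((continuousAt_cpow_const (mem_slitPlane_of_re_nonneg ha.1 ha0)).mul_const
      _).const_mul _).continuousWithinAt
  · exact norm_laplaceTerm_anti hδ.le hr0 (by simpa [abs_of_pos hr] using ha.2) b n

theorem continuousOn_integral_cexp_neg_mul_mul {g : ℝ → ℂ} (hg : IntegrableOn g (Ioi 0)) :
    ContinuousOn (fun a : ℂ ↦ ∫ x in Ioi (0 : ℝ), cexp (-a * x) * g x) {a | 0 ≤ a.re} := by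
  refine continuousOn_of_dominated (bound := fun x ↦ ‖g x‖)
    (fun a _ ↦ (Continuous.aestronglyMeasurable (by fun_prop)).mul hg.aestronglyMeasurable)
    (fun a (ha : 0 ≤ a.re) ↦ ae_restrict_of_forall_mem measurableSet_Ioi fun x (hx : 0 < x) ↦ ?_)
    hg.norm (ae_of_all _ fun x ↦ by fun_prop)
  rw [norm_mul, Complex.norm_exp]
  refine mul_le_of_le_one_left (norm_nonneg _) (exp_le_one_iff.2 ?_)
  rw [Complex.re_mul_ofReal, Complex.neg_re, neg_mul, neg_nonpos]
  positivity

theorem norm_le_norm_add_ofReal (ha : 0 ≤ a.re) {ε : ℝ} (hε : 0 ≤ ε) : ‖a‖ ≤ ‖a + ε‖ := by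
  rw [← sq_le_sq₀ (norm_nonneg _) (norm_nonneg _), Complex.sq_norm, Complex.sq_norm,
    Complex.normSq_apply, Complex.normSq_apply, Complex.add_re, Complex.add_im,
    Complex.ofReal_re, Complex.ofReal_im]
  nlinarith

theorem tsum_laplaceTerm_of_re_nonneg {b : ℂ} (hδ : 0 < δ) (hδ1 : δ < 1) (ha : 0 ≤ a.re)
    (ha0 : a ≠ 0) (hb : 0 < b.re) :
    ∑' n, laplaceTerm δ a b n =
      ∫ x in Ioi (0 : ℝ), cexp (-a * x) * cexp (-b * (x ^ δ : ℝ)) := by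
  have exp_int : IntegrableOn (fun x : ℝ ↦ cexp (-b * (x ^ δ : ℝ))) (Ioi 0) :=
    (integrableOn_exp_neg_mul_rpow hδ hb).mono' (by fun_prop)
      (ae_of_all _ fun x ↦ by simp [Complex.norm_exp])
  have shift : Tendsto (fun ε : ℝ ↦ a + ε) (𝓝[>] 0) (𝓝 a) :=
    ((continuous_const.add Complex.continuous_ofReal).tendsto' 0 a (by simp)).mono_left
      nhdsWithin_le_nhds
  have shift_mem : ∀ᶠ ε : ℝ in 𝓝[>] 0, a + ε ∈ {z : ℂ | 0 ≤ z.re} ∩ {z | ‖a‖ ≤ ‖z‖} := by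
    filter_upwards [self_mem_nhdsWithin] with ε (hε : 0 < ε)
    exact ⟨by simpa using add_nonneg ha hε.le, norm_le_norm_add_ofReal ha hε.le⟩
  have tsum_tendsto := (continuousOn_tsum_laplaceTerm hδ hδ1 (norm_pos_iff.2 ha0) b a
    ⟨ha, le_refl ‖a‖⟩).tendsto.comp (tendsto_nhdsWithin_iff.2 ⟨shift, shift_mem⟩)
  have integral_tendsto := (continuousOn_integral_cexp_neg_mul_mul exp_int a ha).tendsto.comp
    (tendsto_nhdsWithin_iff.2 ⟨shift, shift_mem.mono fun ε hε ↦ hε.1⟩)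
  refine tendsto_nhds_unique (tsum_tendsto.congr' ?_) integral_tendsto
  filter_upwards [self_mem_nhdsWithin] with ε (hε : 0 < ε)
  exact tsum_laplaceTerm_of_re_pos hδ hδ1 (by simpa using add_pos_of_nonneg_of_pos ha hε) b

end LaplaceTerm

theorem ofReal_mul_cpow {x : ℝ} (hx : 0 < x) {z : ℂ} (hz : z ≠ 0) (w : ℂ) :
    (x * z) ^ w = (x : ℂ) ^ w * z ^ w := by
  have hx' : (x : ℂ) ≠ 0 := Complex.ofReal_ne_zero.2 hx.ne'
  rw [Complex.cpow_def_of_ne_zero (mul_ne_zero hx' hz), Complex.cpow_def_of_ne_zero hx',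
    Complex.cpow_def_of_ne_zero hz, Complex.log_ofReal_mul hx hz, Complex.ofReal_log hx.le,
    add_mul, Complex.exp_add]

theorem ofReal_mul_I_cpow {x : ℝ} (hx : 0 < x) (r : ℝ) :
    (x * I) ^ (r : ℂ) = (x ^ r : ℝ) * I ^ (r : ℂ) := by
  rw [ofReal_mul_cpow hx Complex.I_ne_zero, Complex.ofReal_cpow hx.le]

theorem re_I_cpow_ofReal (r : ℝ) : (I ^ (r : ℂ)).re = cos (r * (π / 2)) := by
  rw [Complex.cpow_ofReal_re, Complex.norm_I, one_rpow, one_mul, Complex.arg_I, mul_comm]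

theorem cos_mul_pi_div_two_pos {δ : ℝ} (hδ : 0 ≤ δ) (hδ1 : δ < 1) : 0 < cos (δ * (π / 2)) :=
  cos_pos_of_mem_Ioo ⟨by nlinarith [pi_pos], by nlinarith [pi_pos]⟩

theorem neg_I_cpow_neg (z : ℂ) : (-I) ^ (-z) = I ^ z := by
  have arg_ne : I.arg ≠ π := by rw [Complex.arg_I]; linarith [pi_pos]
  rw [← Complex.inv_I, Complex.inv_cpow _ _ arg_ne, Complex.cpow_neg, inv_inv]

theorem inv_Gamma_one_sub {s : ℝ} (hs : 0 < s) :
    (Gamma (1 - s))⁻¹ = Gamma s * sin (π * s) / π := by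
  have h := Gamma_mul_Gamma_one_sub s
  rw [mul_comm, ← eq_div_iff (Gamma_pos_of_pos hs).ne'] at h
  rw [h, inv_div, div_div_eq_mul_div]

/-! ### The stable density and its series -/

/-- The one-sided `δ`-stable density at time `u`, characterised by its Laplace transform
`p ↦ exp (-u p ^ δ)` and defined by inverting that transform along the imaginary axis. -/
noncomputable def stableDensity (δ u t : ℝ) : ℝ :=
  π⁻¹ * (∫ ω in Ioi (0 : ℝ), cexp (t * I * ω) * cexp (-u * (ω * I) ^ (δ : ℂ))).re

theorem re_laplaceTerm_neg_I (δ u : ℝ) {t : ℝ} (ht : 0 < t) (n : ℕ) :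
    (laplaceTerm δ (t * -I) (u * I ^ (δ : ℂ)) n).re =
      -((-u) ^ n / n.factorial * (t ^ (-(δ * n + 1)) * Gamma (δ * n + 1)) *
        sin (π * (δ * n))) := by
  have I_pow : (I ^ (δ : ℂ)) ^ n * I ^ ((δ * n + 1 : ℝ) : ℂ) = I ^ ((2 * (δ * n) + 1 : ℝ) : ℂ) := by
    rw [← Complex.cpow_nat_mul, ← Complex.cpow_add _ _ Complex.I_ne_zero]
    push_cast
    ring_nf
  have factor : laplaceTerm δ (t * -I) (u * I ^ (δ : ℂ)) n =
      ((-u) ^ n / n.factorial * (t ^ (-(δ * n + 1)) * Gamma (δ * n + 1)) : ℝ) *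
        I ^ ((2 * (δ * n) + 1 : ℝ) : ℂ) := by
    rw [laplaceTerm, ofReal_mul_cpow ht (neg_ne_zero.2 Complex.I_ne_zero), ← I_pow, ← neg_mul,
      mul_pow, ← Complex.ofReal_cpow ht.le, Complex.ofReal_neg (δ * n + 1), neg_I_cpow_neg]
    push_cast
    ring
  rw [factor, Complex.re_ofReal_mul, re_I_cpow_ofReal,
    show (2 * (δ * n) + 1) * (π / 2) = π * (δ * n) + π / 2 by ring, cos_add_pi_div_two,
    mul_neg]

theorem re_laplaceTerm_neg_I_zero (δ u : ℝ) {t : ℝ} (ht : 0 < t) :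
    (laplaceTerm δ (t * -I) (u * I ^ (δ : ℂ)) 0).re = 0 := by
  rw [re_laplaceTerm_neg_I δ u ht]
  simp

theorem re_laplaceTerm_neg_I_succ {δ : ℝ} (hδ : 0 < δ) (u : ℝ) {t : ℝ} (ht : 0 < t) (n : ℕ) :
    π⁻¹ * (laplaceTerm δ (t * -I) (u * I ^ (δ : ℂ)) (n + 1)).re = δ * u / t ^ (δ + 1) *
      ((-(u / t ^ δ)) ^ n / (n.factorial * Gamma (-δ * n + 1 - δ))) := by
  have hs : 0 < δ * (n + 1 : ℕ) := by positivity
  have t_pow : t ^ (-(δ * (n + 1 : ℕ) + 1)) = (t ^ (δ + 1))⁻¹ * ((t ^ δ) ^ n)⁻¹ := by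
    rw [← rpow_mul_natCast ht.le, ← rpow_neg ht.le, ← rpow_neg ht.le, ← rpow_add ht]
    push_cast
    ring_nf
  have Gamma_arg : -δ * n + 1 - δ = 1 - δ * (n + 1 : ℕ) := by push_cast; ring
  rw [re_laplaceTerm_neg_I δ u ht, t_pow, Gamma_arg, ← div_div _ (n.factorial : ℝ),
    div_eq_mul_inv _ (Gamma (1 - _)), inv_Gamma_one_sub hs, Gamma_add_one hs.ne',
    Nat.factorial_succ, ← neg_div, div_pow]
  push_cast
  field_simp
  ring

theorem mul_Mwr_eq_stableDensity {δ u t : ℝ} (hδ : 0 < δ) (hδ1 : δ < 1) (hu : 0 < u) (ht : 0 < t) :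
    δ * u / t ^ (δ + 1) * Mwr (u / t ^ δ) δ = stableDensity δ u t := by
  have ha : (t * -I : ℂ) ≠ 0 := by simp [ht.ne']
  have hb : 0 < (u * I ^ (δ : ℂ)).re := by
    rw [Complex.re_ofReal_mul, re_I_cpow_ofReal]
    exact mul_pos hu (cos_mul_pi_div_two_pos hδ.le hδ1)
  have term_summable : Summable (laplaceTerm δ (t * -I) (u * I ^ (δ : ℂ))) :=
    (summable_norm_laplaceTerm hδ hδ1 ha _).of_norm
  calc δ * u / t ^ (δ + 1) * Mwr (u / t ^ δ) δ
      = π⁻¹ * ∑' n, (laplaceTerm δ (t * -I) (u * I ^ (δ : ℂ)) n).re := by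
        rw [(Complex.hasSum_re term_summable.hasSum).summable.tsum_eq_zero_add,
          re_laplaceTerm_neg_I_zero δ u ht, zero_add, Mwr, ← tsum_mul_left, ← tsum_mul_left]
        exact tsum_congr fun n ↦ (re_laplaceTerm_neg_I_succ hδ u ht n).symm
    _ = π⁻¹ * (∑' n, laplaceTerm δ (t * -I) (u * I ^ (δ : ℂ)) n).re := by
        rw [Complex.re_tsum term_summable]
    _ = stableDensity δ u t := by
        rw [tsum_laplaceTerm_of_re_nonneg hδ hδ1 (by simp) ha hb, stableDensity]
        congr 2
        refine setIntegral_congr_fun measurableSet_Ioi fun ω (hω : 0 < ω) ↦ ?_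
        simp only [ofReal_mul_I_cpow hω]
        ring_nf

/-! ### Cauchy's formula for the right half-plane -/

/-- The Cayley transform, mapping the unit disc onto the right half-plane. -/
noncomputable def cayley (w : ℂ) : ℂ := (1 + w) / (1 - w)

theorem re_cayley (w : ℂ) : (cayley w).re = (1 - ‖w‖ ^ 2) / ‖1 - w‖ ^ 2 := by
  rw [cayley, Complex.div_re, Complex.sq_norm, Complex.sq_norm, Complex.normSq_apply w]
  simp only [Complex.add_re, Complex.sub_re, Complex.one_re, Complex.add_im, Complex.sub_im,
    Complex.one_im]
  ring

theorem re_cayley_pos {w : ℂ} (hw : ‖w‖ < 1) : 0 < (cayley w).re := by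
  have hw1 : 1 - w ≠ 0 := sub_ne_zero.2 fun h ↦ by simp [← h] at hw
  rw [re_cayley]
  exact div_pos (sub_pos.2 (pow_lt_one₀ (norm_nonneg w) hw two_ne_zero)) (by positivity)

theorem re_cayley_nonneg {w : ℂ} (hw : ‖w‖ ≤ 1) : 0 ≤ (cayley w).re := by
  rw [re_cayley]
  exact div_nonneg (sub_nonneg.2 (pow_le_one₀ (norm_nonneg w) hw)) (by positivity)

theorem differentiableAt_cayley {w : ℂ} (hw : w ≠ 1) : DifferentiableAt ℂ cayley w :=
  .fun_div (by fun_prop) (by fun_prop) (sub_ne_zero.2 hw.symm)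

theorem tendsto_cayley_cobounded : Tendsto cayley (𝓝[≠] 1) (cobounded ℂ) := by
  have num : Tendsto (fun w : ℂ ↦ 1 + w) (𝓝[≠] 1) (𝓝 (1 + 1)) :=
    (Continuous.tendsto (by fun_prop) 1).mono_left nhdsWithin_le_nhds
  have den : Tendsto (fun w : ℂ ↦ 1 - w) (𝓝[≠] 1) (𝓝[≠] 0) :=
    (Continuous.tendsto' (by fun_prop) 1 0 (sub_self 1)).inf
      (tendsto_principal_principal.2 fun w hw ↦ sub_ne_zero.2 (Ne.symm hw))
  refine tendsto_norm_atTop_iff_cobounded.1 ?_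
  simp only [cayley, div_eq_mul_inv, norm_mul]
  exact num.norm.pos_mul_atTop (by norm_num)
    (tendsto_norm_cobounded_atTop.comp (tendsto_inv₀_nhdsNE_zero.comp den))

theorem circleMap_pi_sub_two_mul_arctan (x : ℝ) :
    circleMap 0 1 (π - 2 * arctan x) = (x * I - 1) / (x * I + 1) := by
  have quot_ne_zero : (1 + x * I) / (1 - x * I) ≠ 0 :=
    div_ne_zero (by simp [Complex.ext_iff]) (by simp [Complex.ext_iff])
  have exp_arctan : cexp (2 * (x : ℂ).arctan * I) = (1 + x * I) / (1 - x * I) := by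
    rw [← Complex.exp_log quot_ne_zero, Complex.arctan]
    congr 1
    linear_combination -Complex.log ((1 + x * I) / (1 - x * I)) * Complex.I_mul_I
  rw [circleMap_zero, Complex.ofReal_one, one_mul]
  push_cast
  rw [sub_mul, Complex.exp_sub, Complex.exp_pi_mul_I, exp_arctan, div_div_eq_mul_div,
    neg_one_mul, neg_sub, add_comm]

theorem circleMap_pi_sub_two_mul_arctan_ne_one (x : ℝ) :
    circleMap 0 1 (π - 2 * arctan x) ≠ 1 := by
  have den : x * I + 1 ≠ 0 := by simp [Complex.ext_iff]
  rw [circleMap_pi_sub_two_mul_arctan, Ne, div_eq_one_iff_eq den]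
  norm_num [Complex.ext_iff]

theorem cayley_circleMap_pi_sub_two_mul_arctan (x : ℝ) :
    cayley (circleMap 0 1 (π - 2 * arctan x)) = x * I := by
  have den : x * I + 1 ≠ 0 := by simp [Complex.ext_iff]
  rw [cayley, circleMap_pi_sub_two_mul_arctan, one_add_div den, one_sub_div den,
    div_div_div_cancel_right₀ den]
  ring

section HalfPlane

variable {E : Type*} [NormedAddCommGroup E] [NormedSpace ℂ E] {F : ℂ → E} {L : E} {p : ℝ}

theorem diffContOnCl_update_comp_cayley (hp : 0 < p) (hF : DiffContOnCl ℂ F {z | 0 < z.re})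
    (hL : Tendsto F (cobounded ℂ ⊓ 𝓟 {z | 0 ≤ z.re}) (𝓝 L)) :
    DiffContOnCl ℂ (Function.update (fun w ↦ F (p * cayley w)) 1 L) (Metric.ball 0 1) := by
  have hp' : (p : ℂ) ≠ 0 := Complex.ofReal_ne_zero.2 hp.ne'
  refine ⟨fun w hw ↦ ?_, ?_⟩
  · have hw1 : ‖w‖ < 1 := mem_ball_zero_iff.1 hw
    have hw_ne : w ≠ 1 := by rintro rfl; simp at hw1
    have diff : DifferentiableAt ℂ F (p * cayley w) :=
      hF.differentiableAt (isOpen_lt continuous_const Complex.continuous_re)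
        (by simpa using mul_pos hp (re_cayley_pos hw1))
    refine (DifferentiableAt.congr_of_eventuallyEq
      (diff.comp w ((differentiableAt_cayley hw_ne).const_mul _)) ?_).differentiableWithinAt
    filter_upwards [eventually_ne_nhds hw_ne] with v hv using Function.update_of_ne hv _ _
  rw [closure_ball _ one_ne_zero]
  have F_cont : ContinuousOn F {z | 0 ≤ z.re} := Complex.closure_setOfPred_lt_re 0 ▸ hF.continuousOn
  have maps : MapsTo (fun w ↦ p * cayley w) (Metric.closedBall 0 1) {z | 0 ≤ z.re} := by
    intro w hw
    rw [mem_ofPred, Complex.re_ofReal_mul]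
    exact mul_nonneg hp.le (re_cayley_nonneg (mem_closedBall_zero_iff.1 hw))
  intro w hw
  obtain rfl | hw1 := eq_or_ne w 1
  · rw [continuousWithinAt_update_same]
    refine hL.comp (tendsto_inf.2 ⟨?_, ?_⟩)
    · have scaled : Tendsto (fun w ↦ p * cayley w) (𝓝[≠] 1) (cobounded ℂ) := by
        refine tendsto_norm_atTop_iff_cobounded.1 ?_
        simp only [norm_mul]
        exact (tendsto_norm_cobounded_atTop.comp tendsto_cayley_cobounded).const_mul_atTop
          (norm_pos_iff.2 hp')
      exact scaled.mono_left (nhdsWithin_mono _ fun w hw ↦ hw.2)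
    · exact tendsto_principal.2 (eventually_nhdsWithin_of_forall fun w hw ↦ maps hw.1)
  · rw [continuousWithinAt_update_of_ne hw1]
    exact ContinuousWithinAt.comp (F_cont _ (maps hw))
      ((differentiableAt_cayley hw1).continuousAt.const_mul _).continuousWithinAt maps

theorem image_pi_sub_two_mul_arctan_div (hp : 0 < p) :
    (fun ω ↦ π - 2 * arctan (ω / p)) '' univ = Ioo 0 (2 * π) := by
  refine (image_subset_iff.2 fun ω _ ↦ ?_).antisymm fun θ hθ ↦ ⟨p * tan ((π - θ) / 2), trivial, ?_⟩
  · exact ⟨by linarith [arctan_lt_pi_div_two (ω / p)],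
      by linarith [neg_pi_div_two_lt_arctan (ω / p)]⟩
  · simp only [mul_div_cancel_left₀ _ hp.ne']
    rw [arctan_tan (by linarith [hθ.2]) (by linarith [hθ.1])]
    ring

theorem hasDerivAt_pi_sub_two_mul_arctan_div (hp : 0 < p) (ω : ℝ) :
    HasDerivAt (fun ω ↦ π - 2 * arctan (ω / p)) (-(2 * p / (p ^ 2 + ω ^ 2))) ω := by
  convert! ((hasDerivAt_id ω).div_const p).arctan.const_mul 2 |>.const_sub π using 1
  simp only [id_eq]
  field_simp

theorem integral_poissonKernel_smul [CompleteSpace E] (hp : 0 < p)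
    (hF : DiffContOnCl ℂ F {z | 0 < z.re})
    (hL : Tendsto F (cobounded ℂ ⊓ 𝓟 {z | 0 ≤ z.re}) (𝓝 L)) :
    ∫ ω : ℝ, (2 * p / (p ^ 2 + ω ^ 2)) • F (ω * I) = (2 * π) • F p := by
  set G := Function.update (fun w ↦ F (p * cayley w)) 1 L
  have mean : circleAverage G 0 1 = F p := by
    rw [DiffContOnCl.circleAverage]
    · simp [G, cayley]
    · simpa using diffContOnCl_update_comp_cayley hp hF hL
  have angle_inj : InjOn (fun ω ↦ π - 2 * arctan (ω / p)) univ := by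
    intro x _ y _ h
    have : arctan (x / p) = arctan (y / p) := by simpa using h
    simpa [hp.ne'] using arctan_injective this
  have subst := integral_image_eq_integral_abs_deriv_smul MeasurableSet.univ
    (fun ω _ ↦ (hasDerivAt_pi_sub_two_mul_arctan_div hp ω).hasDerivWithinAt) angle_inj
    fun θ ↦ G (circleMap 0 1 θ)
  rw [image_pi_sub_two_mul_arctan_div hp, ← integral_Ioc_eq_integral_Ioo,
    ← intervalIntegral.integral_of_le (by positivity), setIntegral_univ] at subst
  rw [← mean, circleAverage_def, smul_inv_smul₀ (by positivity), subst]
  refine integral_congr_ae (.of_forall fun ω ↦ ?_)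
  simp only [G]
  rw [abs_neg, abs_of_pos (by positivity),
    Function.update_of_ne (circleMap_pi_sub_two_mul_arctan_ne_one _),
    cayley_circleMap_pi_sub_two_mul_arctan]
  have hp' : (p : ℂ) ≠ 0 := Complex.ofReal_ne_zero.2 hp.ne'
  congr 2
  push_cast
  field_simp

theorem integral_cauchyKernel_smul [CompleteSpace E] (hp : 0 < p)
    (hF : DiffContOnCl ℂ F {z | 0 < z.re})
    (hL : Tendsto (fun z ↦ z • F z) (cobounded ℂ ⊓ 𝓟 {z | 0 ≤ z.re}) (𝓝 L)) :
    ∫ ω : ℝ, (p - ω * I)⁻¹ • F (ω * I) = (2 * π) • F p := by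
  have hp' : (p : ℂ) ≠ 0 := Complex.ofReal_ne_zero.2 hp.ne'
  have F_tendsto : Tendsto F (cobounded ℂ ⊓ 𝓟 {z | 0 ≤ z.re}) (𝓝 0) := by
    rw [← zero_smul ℂ L]
    refine ((tendsto_inv₀_cobounded.mono_left inf_le_left).smul hL).congr' ?_
    filter_upwards [mem_inf_of_left (Bornology.eventually_ne_cobounded 0)] with z hz
    exact inv_smul_smul₀ hz _
  -- On the imaginary axis, `(z + p) / (2 p)` times the Poisson kernel is the Cauchy kernel.
  have key := integral_poissonKernel_smul hp (F := fun z ↦ ((z + p) / (2 * p)) • F z)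
    (.smul (Differentiable.diffContOnCl (by fun_prop)) hF)
    (L := (2 * p : ℂ)⁻¹ • (L + (p : ℂ) • (0 : E))) ?_
  · have coeff : ((p : ℂ) + p) / (2 * p) = 1 := by field_simp; ring
    rw [coeff, one_smul] at key
    rw [← key]
    refine integral_congr_ae (.of_forall fun ω ↦ ?_)
    simp only
    rw [← Complex.coe_smul, smul_smul]
    congr 1
    have h₁ : (p - ω * I : ℂ) ≠ 0 := by simp [Complex.ext_iff, hp.ne']
    have h₂ : (p ^ 2 + ω ^ 2 : ℂ) ≠ 0 := by exact_mod_cast (by positivity : p ^ 2 + ω ^ 2 ≠ 0)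
    push_cast
    field_simp
    linear_combination (ω : ℂ) ^ 2 * Complex.I_sq
  · refine ((hL.add (F_tendsto.const_smul (p : ℂ))).const_smul _).congr fun z ↦ ?_
    rw [← add_smul, smul_smul, div_eq_inv_mul]

end HalfPlane

/-! ### Laplace transform of the stable density -/

section Exponent

variable {δ u : ℝ}

theorem norm_exp_neg_mul_cpow_le_s8 (hδ : 0 ≤ δ) (hδ1 : δ ≤ 1) (hu : 0 ≤ u) {z : ℂ} (hz : 0 ≤ z.re) :
    ‖cexp (-u * z ^ (δ : ℂ))‖ ≤ rexp (-(u * cos (δ * (π / 2))) * ‖z‖ ^ δ) := by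
  have cos_arg : cos (δ * (π / 2)) ≤ cos (z.arg * δ) := by
    have arg_le := Complex.abs_arg_le_pi_div_two_iff.2 hz
    rw [← cos_abs (z.arg * δ), abs_mul, abs_of_nonneg hδ, mul_comm _ δ]
    exact cos_le_cos_of_nonneg_of_le_pi (by positivity) (by nlinarith [pi_pos]) (by gcongr)
  rw [Complex.norm_exp, ← Complex.ofReal_neg, Complex.re_ofReal_mul, Complex.cpow_ofReal_re,
    exp_le_exp]
  have : 0 ≤ u * ‖z‖ ^ δ := by positivity
  nlinarith

theorem diffContOnCl_exp_neg_mul_cpow (hδ : 0 < δ) (u : ℝ) :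
    DiffContOnCl ℂ (fun z : ℂ ↦ cexp (-u * z ^ (δ : ℂ))) {z | 0 < z.re} := by
  refine ⟨fun z hz ↦ ?_, ?_⟩
  · exact ((differentiableAt_id.cpow_const (.inl hz)).const_mul _).cexp.differentiableWithinAt
  · rw [Complex.closure_setOfPred_lt_re]
    exact fun z hz ↦ ((Complex.continuousAt_cpow_const_of_re_pos (.inl hz)
      (by simpa using hδ)).const_mul _).cexp.continuousWithinAt

theorem tendsto_smul_exp_neg_mul_cpow (hδ : 0 < δ) (hδ1 : δ < 1) (hu : 0 < u) :
    Tendsto (fun z : ℂ ↦ z • cexp (-u * z ^ (δ : ℂ))) (cobounded ℂ ⊓ 𝓟 {z | 0 ≤ z.re}) (𝓝 0) := by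
  have decay : Tendsto (fun r : ℝ ↦ r * rexp (-(u * cos (δ * (π / 2))) * r ^ δ)) atTop (𝓝 0) := by
    refine ((tendsto_rpow_mul_exp_neg_mul_atTop_nhds_zero δ⁻¹ _
      (mul_pos hu (cos_mul_pi_div_two_pos hδ.le hδ1))).comp (tendsto_rpow_atTop hδ)).congr' ?_
    filter_upwards [eventually_ge_atTop 0] with r hr
    rw [Function.comp_apply, rpow_rpow_inv hr hδ.ne']
  refine squeeze_zero_norm' ?_ (decay.comp (tendsto_norm_cobounded_atTop.mono_left inf_le_left))
  filter_upwards [mem_inf_of_right (mem_principal_self _)] with z hz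
  rw [norm_smul]
  exact mul_le_mul_of_nonneg_left (norm_exp_neg_mul_cpow_le_s8 hδ.le hδ1.le hu.le hz) (norm_nonneg z)

end Exponent

theorem integral_eq_two_mul_re_integral_Ioi {g : ℝ → ℂ} (hg : IntegrableOn g (Ioi 0))
    (hg_conj : ∀ x, g (-x) = conj (g x)) : ∫ x, g x = 2 * (∫ x in Ioi 0, g x).re := by
  have conj_neg : (fun x ↦ conj (g (-x))) = g := funext fun x ↦ by rw [hg_conj, Complex.conj_conj]
  have left_int : IntegrableOn g (Iic 0) := by
    rw [← conj_neg]
    refine IntegrableOn.comp_neg_Iic (f := fun x ↦ conj (g x)) ?_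
    rw [neg_zero, integrableOn_Ici_iff_integrableOn_Ioi]
    exact Complex.conjCLE.integrable_comp_iff.2 hg
  have reflect : ∫ x in Iic 0, g x = conj (∫ x in Ioi 0, g x) := by
    rw [← neg_zero, ← integral_comp_neg_Ioi, ← integral_conj, neg_zero]
    simp only [hg_conj]
  rw [← intervalIntegral.integral_Iic_add_Ioi left_int hg, reflect, add_comm, Complex.add_conj,
    Complex.ofReal_mul, Complex.ofReal_ofNat]

section StableLaplace

variable {δ u t p : ℝ}

theorem norm_exp_neg_mul_mul_I_cpow_le (hδ : 0 ≤ δ) (hδ1 : δ ≤ 1) (hu : 0 ≤ u) {ω : ℝ}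
    (hω : 0 ≤ ω) :
    ‖cexp (-u * (ω * I) ^ (δ : ℂ))‖ ≤ rexp (-(u * cos (δ * (π / 2))) * ω ^ δ) := by
  simpa [abs_of_nonneg hω] using norm_exp_neg_mul_cpow_le_s8 hδ hδ1 hu (z := ω * I) (by simp)

theorem integrableOn_exp_neg_mul_mul_I_cpow (hδ : 0 < δ) (hδ1 : δ < 1) (hu : 0 < u) :
    IntegrableOn (fun ω : ℝ ↦ cexp (-u * (ω * I) ^ (δ : ℂ))) (Ioi 0) :=
  (integrableOn_exp_neg_mul_rpow hδ (mul_pos hu (cos_mul_pi_div_two_pos hδ.le hδ1))).mono'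
    (Measurable.aestronglyMeasurable (by fun_prop)) <|
    ae_restrict_of_forall_mem measurableSet_Ioi fun _ hω ↦
      norm_exp_neg_mul_mul_I_cpow_le hδ.le hδ1.le hu.le (le_of_lt hω)

theorem re_integral_inv_sub_mul_exp_neg_mul_cpow (hδ : 0 < δ) (hδ1 : δ < 1) (hu : 0 < u)
    (hp : 0 < p) :
    (∫ ω in Ioi (0 : ℝ), (p - ω * I)⁻¹ * cexp (-u * (ω * I) ^ (δ : ℂ))).re =
      π * rexp (-u * p ^ δ) := by
  have kernel_bound (ω : ℝ) : ‖(p - ω * I : ℂ)⁻¹‖ ≤ p⁻¹ := by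
    rw [norm_inv]
    gcongr
    simpa using Complex.re_le_norm (p - ω * I)
  have kernel_int : IntegrableOn
      (fun ω : ℝ ↦ (p - ω * I)⁻¹ * cexp (-u * (ω * I) ^ (δ : ℂ))) (Ioi 0) :=
    (integrableOn_exp_neg_mul_mul_I_cpow hδ hδ1 hu).bdd_mul
      (Measurable.aestronglyMeasurable (by fun_prop)) (.of_forall kernel_bound)
  have cauchy := integral_cauchyKernel_smul hp (diffContOnCl_exp_neg_mul_cpow hδ u)
    (tendsto_smul_exp_neg_mul_cpow hδ hδ1 hu)
  simp only [smul_eq_mul] at cauchy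
  rw [integral_eq_two_mul_re_integral_Ioi kernel_int] at cauchy
  · rw [← Complex.ofReal_inj]
    push_cast [Complex.ofReal_cpow hp.le]
    rw [Complex.real_smul] at cauchy
    push_cast at cauchy
    linear_combination cauchy / 2
  · intro ω
    have conj_pow : (-(ω * I)) ^ (δ : ℂ) = conj ((ω * I) ^ (δ : ℂ)) := by
      have arg_ne : (ω * I).arg ≠ π := (Complex.arg_lt_pi_iff.2 (.inl (by simp))).ne
      simpa using Complex.conj_cpow (ω * I) δ arg_ne
    simp [conj_pow, ← Complex.exp_conj]

theorem abs_stableDensity_le (hδ : 0 < δ) (hδ1 : δ < 1) (hu : 0 < u) (t : ℝ) :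
    |stableDensity δ u t| ≤
      π⁻¹ * (cos (δ * (π / 2)) ^ (-1 / δ) * Gamma (1 / δ + 1)) * u ^ (-1 / δ) := by
  have cos_pos := cos_mul_pi_div_two_pos hδ.le hδ1
  have integral_bound :
      ‖∫ ω in Ioi (0 : ℝ), cexp (t * I * ω) * cexp (-u * (ω * I) ^ (δ : ℂ))‖ ≤
        ∫ ω in Ioi (0 : ℝ), rexp (-(u * cos (δ * (π / 2))) * ω ^ δ) := by
    refine norm_integral_le_of_norm_le (integrableOn_exp_neg_mul_rpow hδ (mul_pos hu cos_pos)) <|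
      ae_restrict_of_forall_mem measurableSet_Ioi fun ω (hω : 0 < ω) ↦ ?_
    rw [norm_mul, Complex.norm_exp]
    simpa using norm_exp_neg_mul_mul_I_cpow_le hδ.le hδ1.le hu.le hω.le
  rw [stableDensity, abs_mul, abs_of_pos (inv_pos.2 pi_pos), mul_assoc]
  gcongr
  refine (Complex.abs_re_le_norm _).trans (integral_bound.trans_eq ?_)
  rw [integral_exp_neg_mul_rpow hδ (mul_pos hu cos_pos), mul_rpow hu.le cos_pos.le]
  ring

theorem measurable_stableDensity {α : Type*} [MeasurableSpace α] (δ : ℝ) {f g : α → ℝ}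
    (hf : Measurable f) (hg : Measurable g) : Measurable fun a ↦ stableDensity δ (f a) (g a) := by
  have integrand : Measurable (Function.uncurry fun (a : α) (ω : ℝ) ↦
      cexp (g a * I * ω) * cexp (-f a * (ω * I) ^ (δ : ℂ))) := by
    unfold Function.uncurry
    fun_prop
  exact (Complex.measurable_re.comp
    integrand.stronglyMeasurable.integral_prod_right.measurable).const_mul _

theorem integral_exp_neg_mul_stableDensity (hδ : 0 < δ) (hδ1 : δ < 1) (hu : 0 < u) (hp : 0 < p) :
    ∫ t in Ioi 0, rexp (-p * t) * stableDensity δ u t = rexp (-u * p ^ δ) := by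
  set f : ℝ → ℂ := fun ω ↦ cexp (-u * (ω * I) ^ (δ : ℂ))
  have kernel_int : Integrable (fun q : ℝ × ℝ ↦ cexp (-(p - q.2 * I) * q.1) * f q.2)
      ((volume.restrict (Ioi 0)).prod (volume.restrict (Ioi 0))) := by
    have dom := (exp_neg_integrableOn_Ioi 0 hp).mul_prod
      (integrableOn_exp_neg_mul_mul_I_cpow hδ hδ1 hu).norm
    refine dom.mono' (Measurable.aestronglyMeasurable (by fun_prop)) (.of_forall fun q ↦ ?_)
    rw [norm_mul, Complex.norm_exp]
    simp [f]
  have inner (ω : ℝ) : ∫ t in Ioi (0 : ℝ), cexp (-(p - ω * I) * t) * f ω = (p - ω * I)⁻¹ * f ω := by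
    rw [integral_mul_const, integral_exp_mul_complex_Ioi (by simpa using hp), Complex.ofReal_zero,
      mul_zero, Complex.exp_zero, neg_div_neg_eq, one_div]
  calc
    _ = π⁻¹ * ∫ t in Ioi (0 : ℝ), (∫ ω in Ioi (0 : ℝ), cexp (-(p - ω * I) * t) * f ω).re := by
        rw [← integral_const_mul]
        refine integral_congr_ae (.of_forall fun t ↦ ?_)
        have split (ω : ℝ) :
            cexp (-(p - ω * I) * t) = rexp (-p * t) * cexp (t * I * ω) := by
          push_cast
          rw [← Complex.exp_add]
          ring_nf
        simp only [split, mul_assoc, integral_const_mul, Complex.re_ofReal_mul, stableDensity, f]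
        ring
    _ = π⁻¹ * (∫ ω in Ioi (0 : ℝ), (p - ω * I)⁻¹ * f ω).re := by
        have := integral_re kernel_int.integral_prod_left
        simp only [RCLike.re_eq_complex_re] at this
        rw [this, integral_integral_swap kernel_int]
        simp only [inner]
    _ = rexp (-u * p ^ δ) := by
        rw [re_integral_inv_sub_mul_exp_neg_mul_cpow hδ hδ1 hu hp, inv_mul_cancel_left₀ pi_ne_zero]

theorem integrable_exp_neg_mul_mul_stableDensity {w : ℝ → ℝ} (hδ : 0 < δ) (hδ1 : δ < 1)
    (hp : 0 < p) (hw : IntegrableOn (fun u ↦ w u * u ^ (-1 / δ)) (Ioi 0)) :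
    Integrable (fun q : ℝ × ℝ ↦ rexp (-p * q.1) * (w q.2 * stableDensity δ q.2 q.1))
      ((volume.restrict (Ioi 0)).prod (volume.restrict (Ioi 0))) := by
  have pos : ∀ᵐ q : ℝ × ℝ ∂(volume.restrict (Ioi 0)).prod (volume.restrict (Ioi 0)), 0 < q.2 :=
    Measure.quasiMeasurePreserving_snd.ae (ae_restrict_mem measurableSet_Ioi)
  have scaled_meas : Measurable fun q : ℝ × ℝ ↦ q.2 ^ (1 / δ) * stableDensity δ q.2 q.1 :=
    (measurable_snd.pow_const _).mul (measurable_stableDensity δ measurable_snd measurable_fst)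
  have scaled_int := (Integrable.mul_prod (exp_neg_integrableOn_Ioi 0 hp) hw).mul_bdd
    (c := π⁻¹ * (cos (δ * (π / 2)) ^ (-1 / δ) * Gamma (1 / δ + 1)))
    scaled_meas.aestronglyMeasurable ?_
  · refine scaled_int.congr ?_
    filter_upwards [pos] with q hq
    have cancel : q.2 ^ (-1 / δ) * q.2 ^ (1 / δ) = 1 := by
      rw [← rpow_add hq, ← add_div, neg_add_cancel, zero_div, rpow_zero]
    linear_combination rexp (-p * q.1) * w q.2 * stableDensity δ q.2 q.1 * cancel
  · filter_upwards [pos] with q hq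
    rw [norm_mul, norm_eq_abs, norm_eq_abs, abs_of_pos (rpow_pos_of_pos hq _), mul_comm,
      ← le_div_iff₀ (rpow_pos_of_pos hq _)]
    refine (abs_stableDensity_le hδ hδ1 hq q.1).trans_eq ?_
    rw [neg_div, rpow_neg hq.le, ← div_eq_mul_inv]

theorem integral_exp_neg_mul_integral_mul_stableDensity {w : ℝ → ℝ} (hδ : 0 < δ) (hδ1 : δ < 1)
    (hp : 0 < p) (hw : IntegrableOn (fun u ↦ w u * u ^ (-1 / δ)) (Ioi 0)) :
    ∫ t in Ioi 0, rexp (-p * t) * ∫ u in Ioi 0, w u * stableDensity δ u t =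
      ∫ u in Ioi 0, w u * rexp (-u * p ^ δ) := by
  simp only [← integral_const_mul]
  rw [integral_integral_swap (integrable_exp_neg_mul_mul_stableDensity hδ hδ1 hp hw)]
  refine setIntegral_congr_fun measurableSet_Ioi fun u hu ↦ ?_
  simp only [mul_left_comm _ (w u)]
  rw [integral_const_mul, integral_exp_neg_mul_stableDensity hδ hδ1 hu hp]

end StableLaplace

/-! ### The Cauchy–Schlömilch substitution and the Lévy density -/

section CauchySchlomilch

variable {a b : ℝ}

theorem hasDerivAt_mul_sub_div {x : ℝ} (hx : x ≠ 0) :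
    HasDerivAt (fun x ↦ a * x - b / x) (a + b / x ^ 2) x := by
  convert! ((hasDerivAt_id x).const_mul a).sub ((hasDerivAt_inv hx).const_mul b) using 1
  ring

theorem strictMonoOn_mul_sub_div (ha : 0 < a) (hb : 0 < b) :
    StrictMonoOn (fun x ↦ a * x - b / x) (Ioi 0) := by
  intro x (hx : 0 < x) y _ hxy
  dsimp only
  gcongr

theorem image_mul_sub_div_Ioi (ha : 0 < a) (hb : 0 < b) :
    (fun x ↦ a * x - b / x) '' Ioi 0 = univ := by
  refine eq_univ_of_forall fun y ↦ ?_
  have disc_pos : 0 ≤ y ^ 2 + 4 * a * b := by positivity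
  have root_pos : 0 < y + √(y ^ 2 + 4 * a * b) := by
    have : |y| < √(y ^ 2 + 4 * a * b) := by
      rw [← sqrt_sq_eq_abs]
      exact sqrt_lt_sqrt (sq_nonneg y) (by linarith [mul_pos ha hb])
    linarith [neg_abs_le y]
  refine ⟨(y + √(y ^ 2 + 4 * a * b)) / (2 * a), div_pos root_pos (by positivity), ?_⟩
  have root_ne := root_pos.ne'
  simp only
  rw [div_div_eq_mul_div, mul_div_assoc', mul_comm 2 a, ← mul_assoc, mul_div_mul_left _ _ ha.ne']
  field_simp
  linear_combination sq_sqrt disc_pos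

theorem abs_add_div_sq (ha : 0 ≤ a) (hb : 0 ≤ b) (x : ℝ) : |a + b / x ^ 2| = a + b / x ^ 2 :=
  abs_of_nonneg (by positivity)

section Comp

variable {E : Type*} [NormedAddCommGroup E] [NormedSpace ℝ E] {f : ℝ → E}

theorem integral_comp_div_Ioi (f : ℝ → E) (hb : 0 < b) :
    ∫ x in Ioi 0, (b / x ^ 2) • f (b / x) = ∫ x in Ioi 0, f x := by
  have deriv : ∀ x ∈ Ioi (0 : ℝ), HasDerivWithinAt (fun x ↦ b / x) (-(b / x ^ 2)) (Ioi 0) x := by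
    intro x (hx : 0 < x)
    convert! ((hasDerivAt_inv hx.ne').const_mul b).hasDerivWithinAt using 1
    ring
  have maps : MapsTo (fun x ↦ b / x) (Ioi 0) (Ioi 0) := fun x hx ↦ div_pos hb hx
  have invol : LeftInvOn (fun x ↦ b / x) (fun x ↦ b / x) (Ioi 0) := fun x _ ↦
    div_div_cancel₀ hb.ne'
  have bij : BijOn (fun x ↦ b / x) (Ioi 0) (Ioi 0) := InvOn.bijOn ⟨invol, invol⟩ maps maps
  have subst := integral_image_eq_integral_abs_deriv_smul measurableSet_Ioi deriv bij.injOn f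
  have abs_deriv (x : ℝ) : |-(b / x ^ 2)| = b / x ^ 2 := by
    rw [abs_neg, abs_of_nonneg (by positivity)]
  simpa only [bij.image_eq, abs_deriv] using subst.symm

theorem integral_add_div_sq_smul_comp_mul_sub_div_Ioi (f : ℝ → E) (ha : 0 < a) (hb : 0 < b) :
    ∫ x in Ioi 0, (a + b / x ^ 2) • f (a * x - b / x) = ∫ x, f x := by
  have subst := integral_image_eq_integral_abs_deriv_smul measurableSet_Ioi
    (fun x hx ↦ (hasDerivAt_mul_sub_div (ne_of_gt hx)).hasDerivWithinAt)
    (strictMonoOn_mul_sub_div ha hb).injOn f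
  rw [image_mul_sub_div_Ioi ha hb, setIntegral_univ] at subst
  simp only [subst, abs_add_div_sq ha.le hb.le]

theorem integrableOn_add_div_sq_smul_comp_mul_sub_div_Ioi (ha : 0 < a) (hb : 0 < b)
    (hf : Integrable f) :
    IntegrableOn (fun x ↦ (a + b / x ^ 2) • f (a * x - b / x)) (Ioi 0) := by
  have subst := (integrableOn_image_iff_integrableOn_abs_deriv_smul measurableSet_Ioi
    (fun x hx ↦ (hasDerivAt_mul_sub_div (ne_of_gt hx)).hasDerivWithinAt)
    (strictMonoOn_mul_sub_div ha hb).injOn f).1 hf.integrableOn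
  simpa only [abs_add_div_sq ha.le hb.le] using subst

theorem integrableOn_comp_mul_sub_div_Ioi (ha : 0 < a) (hb : 0 < b) (hf : Integrable f) :
    IntegrableOn (fun x ↦ f (a * x - b / x)) (Ioi 0) := by
  have inv_bound (x : ℝ) : ‖(a + b / x ^ 2)⁻¹‖ ≤ a⁻¹ := by
    rw [norm_inv, norm_eq_abs, abs_add_div_sq ha.le hb.le]
    gcongr
    exact le_add_of_nonneg_right (by positivity)
  exact ((integrableOn_add_div_sq_smul_comp_mul_sub_div_Ioi ha hb hf).bdd_smul a⁻¹
    (Measurable.aestronglyMeasurable (by fun_prop)) (.of_forall inv_bound)).congr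
    (.of_forall fun x ↦ inv_smul_smul₀ (by positivity : a + b / x ^ 2 ≠ 0) _)

theorem integral_comp_mul_sub_div_Ioi (ha : 0 < a) (hb : 0 < b) (hf : Integrable f)
    (hf_even : ∀ x, f (-x) = f x) :
    ∫ x in Ioi 0, f (a * x - b / x) = (2 * a)⁻¹ • ∫ x, f x := by
  -- The involution `x ↦ b / (a x)` negates `a x - b / x`.
  have reflect : ∫ x in Ioi 0, (b / x ^ 2) • f (a * x - b / x) =
      a • ∫ x in Ioi 0, f (a * x - b / x) := by
    rw [← integral_comp_div_Ioi (fun x ↦ f (a * x - b / x)) (div_pos hb ha), ← integral_smul]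
    refine setIntegral_congr_fun measurableSet_Ioi fun x (hx : 0 < x) ↦ ?_
    rw [smul_smul, ← hf_even]
    congr 1
    · field_simp
    · congr 1
      field_simp
      ring
  have diff : ∫ x in Ioi 0, (b / x ^ 2) • f (a * x - b / x) =
      (∫ x, f x) - a • ∫ x in Ioi 0, f (a * x - b / x) := by
    rw [← integral_add_div_sq_smul_comp_mul_sub_div_Ioi f ha hb, ← integral_smul, ← integral_sub
      (integrableOn_add_div_sq_smul_comp_mul_sub_div_Ioi ha hb hf)
      ((integrableOn_comp_mul_sub_div_Ioi ha hb hf).integrable.fun_smul a)]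
    simp only [add_smul, add_sub_cancel_left]
  rw [eq_inv_smul_iff₀ (by positivity), two_mul, add_smul]
  exact eq_sub_iff_add_eq.1 (reflect.symm.trans diff)

end Comp

end CauchySchlomilch

/-- The density in `u` of the one-sided `1/2`-stable law whose Laplace transform in `u` is
`exp (-c * √s)`. -/
noncomputable def levyDensity (c u : ℝ) : ℝ :=
  c / (2 * √π) * u ^ (-(3 / 2) : ℝ) * rexp (-c ^ 2 / (4 * u))

theorem integral_levyDensity_mul_exp_neg {c s : ℝ} (hc : 0 < c) (hs : 0 < s) :
    ∫ u in Ioi 0, levyDensity c u * rexp (-s * u) = rexp (-c * √s) := by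
  -- Substitute `u = v⁻²`.
  have complete_square : ∀ v ∈ Ioi (0 : ℝ),
      (|(-2 : ℝ)| * v ^ (-2 - 1 : ℝ)) • (levyDensity c (v ^ (-2 : ℝ)) * rexp (-s * v ^ (-2 : ℝ))) =
        c / √π * rexp (-c * √s) * rexp (-(c / 2 * v - √s / v) ^ 2) := by
    intro v (hv : 0 < v)
    have inv_sq : v ^ (-2 : ℝ) = (v ^ 2)⁻¹ := by rw [rpow_neg hv.le, rpow_two]
    have jacobian : v ^ (-2 - 1 : ℝ) * (v ^ (-2 : ℝ)) ^ (-(3 / 2) : ℝ) = 1 := by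
      rw [← rpow_mul hv.le, ← rpow_add hv]
      norm_num
    have exponent : rexp (-c ^ 2 / (4 * v ^ (-2 : ℝ))) * rexp (-s * v ^ (-2 : ℝ)) =
        rexp (-c * √s) * rexp (-(c / 2 * v - √s / v) ^ 2) := by
      rw [← exp_add, ← exp_add, inv_sq]
      congr 1
      field_simp
      linear_combination 16 * sq_sqrt hs.le
    rw [smul_eq_mul, levyDensity, abs_neg, abs_two]
    calc
      _ = c / √π * (v ^ (-2 - 1 : ℝ) * (v ^ (-2 : ℝ)) ^ (-(3 / 2) : ℝ)) *
          (rexp (-c ^ 2 / (4 * v ^ (-2 : ℝ))) * rexp (-s * v ^ (-2 : ℝ))) := by ring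
      _ = _ := by rw [jacobian, exponent]; ring
  rw [← integral_comp_rpow_Ioi _ (by norm_num : (-2 : ℝ) ≠ 0),
    setIntegral_congr_fun measurableSet_Ioi complete_square, integral_const_mul,
    integral_comp_mul_sub_div_Ioi (f := fun x ↦ rexp (-x ^ 2)) (half_pos hc) (sqrt_pos.2 hs)
      (by simpa using integrable_exp_neg_mul_sq one_pos) (by simp)]
  have gauss : ∫ x : ℝ, rexp (-x ^ 2) = √π := by simpa using integral_gaussian 1
  have : √π ≠ 0 := by positivity
  rw [gauss, smul_eq_mul]
  field_simp

theorem integrableOn_rpow_neg_mul_exp_neg_div {m a : ℝ} (hm : 1 < m) (ha : 0 < a) :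
    IntegrableOn (fun u ↦ u ^ (-m) * rexp (-a / u)) (Ioi 0) := by
  have gamma_int := integrableOn_rpow_mul_exp_neg_mul_rpow (s := m - 2) (p := 1) (b := a)
    (by linarith) one_pos ha
  rw [← integrableOn_Ioi_comp_rpow_iff' _ (neg_ne_zero.2 one_ne_zero)] at gamma_int
  refine gamma_int.congr_fun (fun u (hu : 0 < u) ↦ ?_) measurableSet_Ioi
  simp only [smul_eq_mul]
  rw [← rpow_mul hu.le, ← mul_assoc, ← rpow_add hu, rpow_one, rpow_neg_one]
  ring_nf

theorem integrableOn_levyDensity_mul_exp_neg_mul_rpow {c s r : ℝ} (hc : c ≠ 0) (hs : 0 ≤ s)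
    (hr : r < 1 / 2) :
    IntegrableOn (fun u ↦ levyDensity c u * rexp (-s * u) * u ^ r) (Ioi 0) := by
  have rpow_int := (integrableOn_rpow_neg_mul_exp_neg_div (m := 3 / 2 - r) (a := c ^ 2 / 4)
    (by linarith) (by positivity)).const_mul (c / (2 * √π))
  have exp_le : ∀ᵐ u ∂volume.restrict (Ioi 0), ‖rexp (-s * u)‖ ≤ 1 := by
    refine ae_restrict_of_forall_mem measurableSet_Ioi fun u (hu : 0 < u) ↦ ?_
    rw [norm_of_nonneg (exp_nonneg _), exp_le_one_iff, neg_mul, neg_nonpos]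
    positivity
  refine (rpow_int.mul_bdd (Measurable.aestronglyMeasurable (by fun_prop)) exp_le).congr
    (ae_restrict_of_forall_mem measurableSet_Ioi fun u (hu : 0 < u) ↦ ?_)
  have rpow_split : u ^ (-(3 / 2 - r)) = u ^ (-(3 / 2) : ℝ) * u ^ r := by
    rw [← rpow_add hu]
    ring_nf
  have exponent : -(c ^ 2 / 4) / u = -c ^ 2 / (4 * u) := by rw [neg_div', div_div]
  simp only [levyDensity, rpow_split, exponent]
  ring

theorem levyDensity_mul_stableDensity (c : ℝ) {δ u t : ℝ} (hδ : 0 < δ) (hδ1 : δ < 1) (hu : 0 < u)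
    (ht : 0 < t) :
    levyDensity c u * stableDensity δ u t = δ / 2 * c / (√π * t ^ (δ + 1)) *
      (u ^ (-(1 / 2) : ℝ) * rexp (-c ^ 2 / (4 * u)) * Mwr (u / t ^ δ) δ) := by
  have rpow_half : u ^ (-(1 / 2) : ℝ) = u ^ (-(3 / 2) : ℝ) * u := by
    rw [← rpow_add_one hu.ne']
    norm_num
  rw [← mul_Mwr_eq_stableDensity hδ hδ1 hu ht, levyDensity, rpow_half]
  field_simp

/-- Lemma part (b), equation (2.15): for `0 < 2β < 1`, `c > 0`, `k ≥ 0`, `p > 0`,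
`L{ (βc/(√π t^{2β+1})) ∫_0^∞ u^{-1/2} e^{-c²/(4u)} e^{-k²u} M(u/t^{2β}; 2β) du }(p)
  = exp(−c √(p^{2β} + k²))`. -/
theorem laplace_lemma_b (β c k p : ℝ) (hβ₁ : 0 < 2 * β) (hβ₂ : 2 * β < 1)
    (hc : 0 < c) (hk : 0 ≤ k) (hp : 0 < p) :
    ∫ t in Ioi (0 : ℝ), Real.exp (-p * t) *
        ((β * c / (Real.sqrt π * t ^ (2 * β + 1))) *
          ∫ u in Ioi (0 : ℝ), u ^ (-(1 / 2 : ℝ)) * Real.exp (-c ^ 2 / (4 * u)) *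
            Real.exp (-k ^ 2 * u) * Mwr (u / t ^ (2 * β)) (2 * β)) =
      Real.exp (-c * Real.sqrt (p ^ (2 * β) + k ^ 2)) := by
  have moment : -1 / (2 * β) < 1 / 2 := (div_neg_of_neg_of_pos (by norm_num) hβ₁).trans one_half_pos
  calc
    _ = ∫ t in Ioi 0, rexp (-p * t) *
          ∫ u in Ioi 0, levyDensity c u * rexp (-k ^ 2 * u) * stableDensity (2 * β) u t := by
      refine setIntegral_congr_fun measurableSet_Ioi fun t ht ↦ ?_
      simp only [← integral_const_mul]
      refine setIntegral_congr_fun measurableSet_Ioi fun u hu ↦ ?_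
      have factor := levyDensity_mul_stableDensity c hβ₁ hβ₂ hu ht
      rw [mul_div_cancel_left₀ β two_ne_zero] at factor
      linear_combination -(rexp (-p * t) * rexp (-k ^ 2 * u)) * factor
    _ = ∫ u in Ioi 0, levyDensity c u * rexp (-k ^ 2 * u) * rexp (-u * p ^ (2 * β)) :=
      integral_exp_neg_mul_integral_mul_stableDensity hβ₁ hβ₂ hp
        (integrableOn_levyDensity_mul_exp_neg_mul_rpow hc.ne' (sq_nonneg k) moment)
    _ = ∫ u in Ioi 0, levyDensity c u * rexp (-(p ^ (2 * β) + k ^ 2) * u) := by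
      congr! 2 with u
      rw [mul_assoc, ← exp_add]
      ring_nf
    _ = rexp (-c * √(p ^ (2 * β) + k ^ 2)) := integral_levyDensity_mul_exp_neg hc (by positivity)
end

section
/- The Wright function is entire. Let λ, μ be real numbers with λ > −1 and μ > 0. Then for every complex number z the series W(z; λ, μ) = ∑_{n=0}^∞ z^n/(n!·Γ(λn + μ)) converges absolutely (the family n ↦ z^n/(n!·Γ(λn+μ)) is summable for all z ∈ ℂ); equivalently, the power series ∑ z^n/(n!·Γ(λn+μ)) has infinite radius of convergence. -/
open Complex

/-!
By Stirling, `1 / Γ(λn + μ)` is of order `(n!) ^ (-Re λ)` up to exponential factors, so the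
coefficients `1 / (n! Γ(λn + μ))` decay superexponentially as soon as `Re λ > -1`. Stirling's
formula itself is avoided: `1 / |Γ(w)|` is at most `C exp (π |Im w|) Γ(r)` whenever `r ≥ 2` and
`r ≥ 3 - Re w`. To the left of the line `Re w = 1 / 2` this is the reflection formula; to the right
it follows by comparison with that line, because `|B(s, t)| ≤ B(Re s, Re t)` makes
`Γ(Re w) / |Γ(w)|` decrease as `Re w` grows. The Wright series is thereby dominated by
`∑ S ^ n Γ(a n + c) / n!` with `0 ≤ a < 1`, which converges by the ratio test, as log-convexity
gives `Γ(x + a) ≤ x ^ a Γ(x)`.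
-/

theorem norm_sin_le_exp_abs_im (z : ℂ) : ‖sin z‖ ≤ Real.exp |z.im| := by
  have htwo : 2 * ‖sin z‖ ≤ 2 * Real.exp |z.im| :=
    calc 2 * ‖sin z‖ = ‖exp (-z * I) - exp (z * I)‖ := by
          simpa using congrArg norm (two_sin z)
      _ ≤ Real.exp z.im + Real.exp (-z.im) := by
          simpa [norm_exp] using norm_sub_le (exp (-z * I)) (exp (z * I))
      _ ≤ 2 * Real.exp |z.im| := by
          rw [two_mul]
          gcongr
          exacts [le_abs_self _, neg_le_abs _]
  linarith

theorem norm_Gamma_le_Gamma_re {s : ℂ} (hs : 0 < s.re) : ‖Gamma s‖ ≤ Real.Gamma s.re := by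
  rw [Gamma_eq_integral hs, GammaIntegral, Real.Gamma_eq_integral hs]
  refine (MeasureTheory.norm_integral_le_integral_norm _).trans_eq ?_
  refine MeasureTheory.setIntegral_congr_fun measurableSet_Ioi fun x hx => ?_
  simp [norm_cpow_eq_rpow_re_of_pos hx, norm_exp]

theorem norm_betaIntegral_le_beta_re {u v : ℂ} (hu : 0 < u.re) (hv : 0 < v.re) :
    ‖betaIntegral u v‖ ≤ ProbabilityTheory.beta u.re v.re := by
  have hnorm : ∀ x ∈ Set.Ioo (0 : ℝ) 1,
      ((‖(x : ℂ) ^ (u - 1) * (1 - (x : ℂ)) ^ (v - 1)‖ : ℝ) : ℂ) =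
        (x : ℂ) ^ ((u.re : ℂ) - 1) * (1 - (x : ℂ)) ^ ((v.re : ℂ) - 1) := by
    rintro x ⟨hx0, hx1⟩
    have hx1' : 0 < 1 - x := sub_pos.2 hx1
    rw [norm_mul, ← ofReal_one, ← ofReal_sub, norm_cpow_eq_rpow_re_of_pos hx0,
      norm_cpow_eq_rpow_re_of_pos hx1', ofReal_mul, ofReal_cpow hx0.le, ofReal_cpow hx1'.le]
    simp
  have hbeta : ((∫ x in (0 : ℝ)..1, ‖(x : ℂ) ^ (u - 1) * (1 - (x : ℂ)) ^ (v - 1)‖ : ℝ) : ℂ) =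
      betaIntegral u.re v.re := by
    rw [← intervalIntegral.integral_ofReal, betaIntegral]
    exact intervalIntegral.integral_congr_Ioo_of_le zero_le_one hnorm
  rw [ProbabilityTheory.beta_eq_betaIntegralReal _ _ hu hv, ← hbeta, ofReal_re]
  exact intervalIntegral.norm_integral_le_integral_norm zero_le_one

theorem Gamma_re_add_mul_norm_Gamma_le {s : ℂ} (hs : 0 < s.re) {t : ℝ} (ht : 0 < t) :
    Real.Gamma (s.re + t) * ‖Gamma s‖ ≤ Real.Gamma s.re * ‖Gamma (s + t)‖ := by
  have hΓt : 0 < Real.Gamma t := Real.Gamma_pos_of_pos ht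
  have hbeta : ‖Gamma s‖ * Real.Gamma t =
      ‖Gamma (s + t)‖ * ‖betaIntegral s t‖ := by
    simpa [Gamma_ofReal, abs_of_pos hΓt] using
      congrArg norm (Gamma_mul_Gamma_eq_betaIntegral hs (t := t) (by simpa))
  have hle : ‖betaIntegral s t‖ ≤ Real.Gamma s.re * Real.Gamma t / Real.Gamma (s.re + t) :=
    norm_betaIntegral_le_beta_re hs (v := t) (by simpa)
  refine le_of_mul_le_mul_right ?_ hΓt
  calc Real.Gamma (s.re + t) * ‖Gamma s‖ * Real.Gamma t
      = Real.Gamma (s.re + t) * (‖Gamma (s + t)‖ * ‖betaIntegral s t‖) := by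
        rw [mul_assoc, hbeta]
    _ ≤ Real.Gamma (s.re + t) *
          (‖Gamma (s + t)‖ * (Real.Gamma s.re * Real.Gamma t / Real.Gamma (s.re + t))) := by
        gcongr
    _ = Real.Gamma s.re * ‖Gamma (s + t)‖ * Real.Gamma t := by
        field_simp

theorem inv_Gamma_eq_Gamma_one_sub_mul_sin_div_pi {w : ℂ} (hw : w.re < 1) :
    (Gamma w)⁻¹ = Gamma (1 - w) * sin (Real.pi * w) / Real.pi := by
  have hne : Gamma (1 - w) ≠ 0 := Gamma_ne_zero_of_re_pos (by simpa using hw)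
  rw [eq_div_of_mul_eq hne (Gamma_mul_Gamma_one_sub w), div_div, inv_div, mul_comm (sin _)]

theorem norm_inv_Gamma_le_of_re_lt_one {w : ℂ} (hw : w.re < 1) :
    ‖(Gamma w)⁻¹‖ ≤ Real.exp (Real.pi * |w.im|) * (Real.Gamma (1 - w.re) / Real.pi) := by
  have hΓ : ‖Gamma (1 - w)‖ ≤ Real.Gamma (1 - w.re) := by
    simpa using norm_Gamma_le_Gamma_re (s := 1 - w) (by simpa using hw)
  have hsin : ‖sin (Real.pi * w)‖ ≤ Real.exp (Real.pi * |w.im|) := by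
    simpa [abs_mul, abs_of_pos Real.pi_pos] using norm_sin_le_exp_abs_im (Real.pi * w)
  rw [inv_Gamma_eq_Gamma_one_sub_mul_sin_div_pi hw, norm_div, norm_mul, norm_real,
    Real.norm_of_nonneg Real.pi_pos.le, ← mul_div_assoc, mul_comm (Real.exp _)]
  gcongr

theorem norm_inv_Gamma_le_of_half_lt_re {w : ℂ} (hw : 1 / 2 < w.re) :
    ‖(Gamma w)⁻¹‖ ≤ Real.exp (Real.pi * |w.im|) * (Real.Gamma w.re)⁻¹ := by
  set s : ℂ := ⟨1 / 2, w.im⟩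
  have hs : 0 < s.re := by norm_num [s]
  have hsw : s + (w.re - 1 / 2 : ℝ) = w := by apply Complex.ext <;> simp [s]
  have hcritical : ‖(Gamma s)⁻¹‖ ≤ Real.exp (Real.pi * |w.im|) * (√Real.pi / Real.pi) := by
    refine (norm_inv_Gamma_le_of_re_lt_one (w := s) (by norm_num [s])).trans_eq ?_
    rw [← Real.Gamma_one_half_eq]
    norm_num [s]
  have hmono : Real.Gamma w.re * ‖Gamma s‖ ≤ √Real.pi * ‖Gamma w‖ := by
    have h := Gamma_re_add_mul_norm_Gamma_le hs (sub_pos.2 hw)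
    rwa [hsw, show s.re = 1 / 2 from rfl, add_sub_cancel, Real.Gamma_one_half_eq] at h
  have hΓs : 0 < ‖Gamma s‖ := norm_pos_iff.2 (Gamma_ne_zero_of_re_pos hs)
  have hΓw : 0 < ‖Gamma w‖ := norm_pos_iff.2 (Gamma_ne_zero_of_re_pos (by linarith))
  calc ‖(Gamma w)⁻¹‖ ≤ √Real.pi * ‖(Gamma s)⁻¹‖ * (Real.Gamma w.re)⁻¹ := by
        rw [norm_inv, norm_inv, ← div_eq_mul_inv, ← div_eq_mul_inv, div_div,
          inv_le_comm₀ hΓw (by positivity), inv_div, div_le_iff₀ (by positivity)]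
        linarith
    _ ≤ √Real.pi * (Real.exp (Real.pi * |w.im|) * (√Real.pi / Real.pi)) *
          (Real.Gamma w.re)⁻¹ := by gcongr
    _ = Real.exp (Real.pi * |w.im|) * (Real.Gamma w.re)⁻¹ := by
        rw [mul_left_comm √Real.pi, ← mul_div_assoc, Real.mul_self_sqrt Real.pi_pos.le,
          div_self Real.pi_ne_zero, mul_one]

theorem Gamma_div_pi_le_Gamma_add_two {y : ℝ} (hy : 1 / 2 ≤ y) :
    Real.Gamma y / Real.pi ≤ Real.Gamma (y + 2) := by
  have hΓ : 0 < Real.Gamma y := Real.Gamma_pos_of_pos (by linarith)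
  calc Real.Gamma y / Real.pi ≤ (y + 1) * (y * Real.Gamma y) := by
        rw [div_le_iff₀ Real.pi_pos]
        have hy' : 1 / 2 * (3 / 2) ≤ y * (y + 1) := by gcongr; linarith
        have hpi : 1 ≤ y * (y + 1) * Real.pi := by nlinarith [Real.pi_gt_three]
        linarith [le_mul_of_one_le_left hΓ.le hpi]
    _ = Real.Gamma (y + 2) := by
        rw [← Real.Gamma_add_one (by linarith), ← Real.Gamma_add_one (by linarith)]
        ring_nf

theorem exists_norm_inv_Gamma_le_exp_mul_Gamma : ∃ C : ℝ, 0 ≤ C ∧ ∀ (w : ℂ) (r : ℝ), 2 ≤ r →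
    3 - w.re ≤ r → ‖(Gamma w)⁻¹‖ ≤ C * Real.exp (Real.pi * |w.im|) * Real.Gamma r := by
  obtain ⟨x₀, hx₀, hmin⟩ := Real.exists_isMinOn_Gamma_Ioi
  have hΓx₀ : 0 < Real.Gamma x₀ := Real.Gamma_pos_of_pos (zero_lt_one.trans hx₀.1)
  refine ⟨max 1 (Real.Gamma x₀)⁻¹, by positivity, fun w r hr hwr => ?_⟩
  have hmono : ∀ y, 2 ≤ y → y ≤ r → Real.Gamma y ≤ Real.Gamma r := fun y hy hyr =>
    Real.Gamma_strictMonoOn_Ici.monotoneOn hy hr hyr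
  have hΓr : 1 ≤ Real.Gamma r := Real.Gamma_two ▸ hmono 2 le_rfl hr
  rw [mul_comm (max _ _), mul_assoc]
  rcases le_or_gt w.re (1 / 2) with hw | hw
  · refine (norm_inv_Gamma_le_of_re_lt_one (by linarith)).trans ?_
    gcongr
    calc Real.Gamma (1 - w.re) / Real.pi ≤ Real.Gamma (1 - w.re + 2) :=
          Gamma_div_pi_le_Gamma_add_two (by linarith)
      _ ≤ Real.Gamma r := hmono _ (by linarith) (by linarith)
      _ ≤ max 1 (Real.Gamma x₀)⁻¹ * Real.Gamma r :=
          le_mul_of_one_le_left (by positivity) (le_max_left _ _)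
  · refine (norm_inv_Gamma_le_of_half_lt_re hw).trans ?_
    gcongr
    calc (Real.Gamma w.re)⁻¹ ≤ (Real.Gamma x₀)⁻¹ :=
          inv_anti₀ hΓx₀ (hmin (one_half_pos.trans hw))
      _ ≤ max 1 (Real.Gamma x₀)⁻¹ := le_max_right _ _
      _ ≤ max 1 (Real.Gamma x₀)⁻¹ * Real.Gamma r := le_mul_of_one_le_right (by positivity) hΓr

theorem exists_norm_inv_Gamma_mul_natCast_add_le {lam μ : ℂ} {a c : ℝ} (ha0 : 0 ≤ a)
    (ha : -lam.re ≤ a) (hc : 2 ≤ c) (hμc : 3 - μ.re ≤ c) : ∃ C : ℝ, ∀ n : ℕ,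
      ‖(Gamma (lam * n + μ))⁻¹‖ ≤
        C * Real.exp (Real.pi * |lam.im|) ^ n * Real.Gamma (a * n + c) := by
  obtain ⟨C, hC, hbound⟩ := exists_norm_inv_Gamma_le_exp_mul_Gamma
  refine ⟨C * Real.exp (Real.pi * |μ.im|), fun n => ?_⟩
  have hr : 2 ≤ a * n + c := le_add_of_nonneg_of_le (by positivity) hc
  have hre : 3 - (lam * n + μ).re ≤ a * n + c := by
    have han : -lam.re * n ≤ a * n := by gcongr
    simp only [add_re, mul_re, natCast_re, natCast_im]
    linarith
  have him : |(lam * n + μ).im| ≤ n * |lam.im| + |μ.im| := by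
    simpa [abs_mul, mul_comm] using abs_add_le (lam.im * n) μ.im
  calc ‖(Gamma (lam * n + μ))⁻¹‖
      ≤ C * Real.exp (Real.pi * (n * |lam.im| + |μ.im|)) * Real.Gamma (a * n + c) := by
        grw [hbound _ _ hr hre, him]
    _ = C * Real.exp (Real.pi * |μ.im|) * Real.exp (Real.pi * |lam.im|) ^ n *
          Real.Gamma (a * n + c) := by
        rw [← Real.exp_nat_mul, mul_add, Real.exp_add, mul_left_comm Real.pi]
        ring

theorem Gamma_add_le_rpow_mul_Gamma {x a : ℝ} (hx : 0 < x) (ha0 : 0 ≤ a) (ha1 : a ≤ 1) :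
    Real.Gamma (x + a) ≤ x ^ a * Real.Gamma x := by
  rcases ha0.eq_or_lt with rfl | ha0
  · simp
  rcases ha1.eq_or_lt with rfl | ha1
  · simp [Real.Gamma_add_one hx.ne']
  have hΓ : 0 < Real.Gamma x := Real.Gamma_pos_of_pos hx
  calc Real.Gamma (x + a) = Real.Gamma (a * (x + 1) + (1 - a) * x) := by ring_nf
    _ ≤ Real.Gamma (x + 1) ^ a * Real.Gamma x ^ (1 - a) :=
        Real.Gamma_mul_add_mul_le_rpow_Gamma_mul_rpow_Gamma (by positivity) hx ha0
          (sub_pos.2 ha1) (by ring)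
    _ = x ^ a * Real.Gamma x := by
        rw [Real.Gamma_add_one hx.ne', Real.mul_rpow hx.le hΓ.le, mul_assoc, ← Real.rpow_add hΓ,
          add_sub_cancel, Real.rpow_one]

open Filter Topology in
theorem tendsto_mul_add_rpow_div_add_one {a c : ℝ} (ha0 : 0 ≤ a) (ha1 : a < 1) (hc : 0 ≤ c) :
    Tendsto (fun n : ℕ => (a * n + c) ^ a / (n + 1)) atTop (𝓝 0) := by
  have hbound : ∀ n : ℕ, (a * n + c) ^ a / (n + 1) ≤ (a + c) ^ a * ((n : ℝ) + 1) ^ (-(1 - a)) := by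
    intro n
    have hn : (0 : ℝ) < n + 1 := n.cast_add_one_pos
    calc (a * n + c) ^ a / (n + 1) ≤ ((a + c) * (n + 1)) ^ a / (n + 1) := by
          gcongr
          nlinarith [(n.cast_nonneg : (0 : ℝ) ≤ n)]
      _ = (a + c) ^ a * ((n : ℝ) + 1) ^ (-(1 - a)) := by
          rw [Real.mul_rpow (by positivity) hn.le, neg_sub, Real.rpow_sub_one hn.ne',
            mul_div_assoc]
  have hlim : Tendsto (fun n : ℕ => (a + c) ^ a * ((n : ℝ) + 1) ^ (-(1 - a))) atTop (𝓝 0) := by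
    simpa using ((tendsto_rpow_neg_atTop (sub_pos.2 ha1)).comp
      (tendsto_atTop_add_const_right _ 1 tendsto_natCast_atTop_atTop)).const_mul ((a + c) ^ a)
  exact squeeze_zero (fun n => by positivity) hbound hlim

theorem summable_pow_mul_Gamma_div_factorial {a c : ℝ} (ha0 : 0 ≤ a) (ha1 : a < 1) (hc : 0 < c)
    (S : ℝ) : Summable (fun n : ℕ => S ^ n * Real.Gamma (a * n + c) / n.factorial) := by
  have hlim := (tendsto_mul_add_rpow_div_add_one ha0 ha1 hc.le).const_mul |S|
  rw [mul_zero] at hlim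
  refine summable_of_ratio_norm_eventually_le one_half_lt_one ?_
  filter_upwards [hlim.eventually_le_const one_half_pos] with n hn
  have hx : 0 < a * n + c := by positivity
  have hΓ : 0 < Real.Gamma (a * n + c) := Real.Gamma_pos_of_pos hx
  have hΓ' : 0 < Real.Gamma (a * n + c + a) := Real.Gamma_pos_of_pos (by positivity)
  calc ‖S ^ (n + 1) * Real.Gamma (a * (n + 1 : ℕ) + c) / (n + 1).factorial‖
      = |S| ^ (n + 1) * Real.Gamma (a * n + c + a) / (n + 1).factorial := by
        rw [show a * (n + 1 : ℕ) + c = a * n + c + a by push_cast; ring]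
        simp [abs_of_pos hΓ']
    _ ≤ |S| ^ (n + 1) * ((a * n + c) ^ a * Real.Gamma (a * n + c)) / (n + 1).factorial := by
        gcongr
        exact Gamma_add_le_rpow_mul_Gamma hx ha0 ha1.le
    _ = |S| * ((a * n + c) ^ a / (n + 1)) *
          ‖S ^ n * Real.Gamma (a * n + c) / n.factorial‖ := by
        simp only [norm_div, norm_mul, norm_pow, Real.norm_eq_abs, abs_of_pos hΓ, Nat.abs_cast,
          Nat.factorial_succ, Nat.cast_mul, Nat.cast_add_one, pow_succ]
        field_simp
    _ ≤ 1 / 2 * ‖S ^ n * Real.Gamma (a * n + c) / n.factorial‖ := by gcongr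

theorem wright_function_entire_general (lam μ : ℂ) (hlam : -1 < lam.re) (z : ℂ) :
    Summable (fun n : ℕ => ‖z ^ n / ((n.factorial : ℂ) * Complex.Gamma (lam * n + μ))‖) := by
  set a : ℝ := max 0 (-lam.re)
  set c : ℝ := max 2 (3 - μ.re)
  set E : ℝ := Real.exp (Real.pi * |lam.im|)
  have ha0 : 0 ≤ a := le_max_left _ _
  have ha1 : a < 1 := max_lt zero_lt_one (by linarith)
  have hc : 2 ≤ c := le_max_left _ _
  obtain ⟨C, hC⟩ := exists_norm_inv_Gamma_mul_natCast_add_le ha0 (le_max_right 0 (-lam.re)) hc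
    (le_max_right 2 (3 - μ.re))
  have hsum := summable_pow_mul_Gamma_div_factorial ha0 ha1 (two_pos.trans_le hc) (‖z‖ * E)
  refine (hsum.mul_left C).of_nonneg_of_le (fun n => norm_nonneg _) fun n => ?_
  calc ‖z ^ n / ((n.factorial : ℂ) * Complex.Gamma (lam * n + μ))‖
      = ‖z‖ ^ n / n.factorial * ‖(Complex.Gamma (lam * n + μ))⁻¹‖ := by
        rw [norm_div, norm_mul, norm_pow, Complex.norm_natCast, norm_inv, ← div_div,
          div_eq_mul_inv]
    _ ≤ ‖z‖ ^ n / n.factorial * (C * E ^ n * Real.Gamma (a * n + c)) := by grw [hC n]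
    _ = C * ((‖z‖ * E) ^ n * Real.Gamma (a * n + c) / n.factorial) := by
        rw [mul_pow]
        ring

/-- The Wright function `W(z; λ, μ) = ∑ z^n/(n! Γ(λn + μ))` is an entire function:
for `λ > −1` and `μ > 0` the defining series converges absolutely for every `z ∈ ℂ`. -/
theorem wright_function_entire (lam μ : ℝ) (hlam : -1 < lam) (hμ : 0 < μ) (z : ℂ) :
    Summable (fun n : ℕ =>
      ‖z ^ n / ((n.factorial : ℂ) * Complex.Gamma ((lam * (n : ℝ) + μ : ℝ) : ℂ))‖) := by
  simpa using wright_function_entire_general lam μ hlam z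
end

section
/- Verification of the Laplace-domain solution for the incomplete lumped formulation (equation (3.11) satisfies (3.2)–(3.5)). Let a, λ, α, γ > 0, s > 0 and C ∈ ℝ. Set K = −λ/a² + √(λ²/a⁴ + 4s/a²) and v(x,z) = C·exp( γx − x·√(γ² + s + (α/2)K) )·exp(−(z/2)K). Then: (i) s·v(x,z) = a²·∂²v/∂z²(x,z) − λ·∂v/∂z(x,z) for all x, z; (ii) s·v(x,0) = ∂²v/∂x²(x,0) − 2γ·∂v/∂x(x,0) + α·∂v/∂z(x,0) for all x; (iii) v(0,0) = C; (iv) v(x,z) → 0 as x² + z² → ∞ with x, z ≥ 0. -/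
open Real Filter Set

/-!
Each exponential factor is an eigenfunction of the constant-coefficient operators, so the two
equations reduce to the characteristic equations of the exponents. In the `z`-direction `K` is the
root `-p + √(p ^ 2 + q)` of `K ^ 2 + 2 * p * K = q`, with `p = λ / a ^ 2` and `q = 4 * s / a ^ 2`;
in the `x`-direction the exponent is `γ - R` with `R ^ 2 = γ ^ 2 + s + (α / 2) * K`. Both exponents
are negative because `p < √(p ^ 2 + q)` for `q > 0`, and on the quadrant
`√(x ^ 2 + z ^ 2) ≤ x + z`, which forces the decay.
-/

theorem lt_sqrt_sq_add (p : ℝ) {q : ℝ} (hq : 0 < q) : p < √(p ^ 2 + q) :=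
  Real.lt_sqrt_of_sq_lt (lt_add_of_pos_right _ hq)

theorem sq_add_two_mul_eq_of_eq_neg_add_sqrt {p q t : ℝ} (h : 0 ≤ p ^ 2 + q)
    (ht : t = -p + √(p ^ 2 + q)) : t ^ 2 + 2 * p * t = q := by
  subst ht
  linear_combination Real.sq_sqrt h

theorem iteratedDeriv_const_mul_exp_const_mul (n : ℕ) (c k y : ℝ) :
    iteratedDeriv n (fun y => c * exp (k * y)) y = k ^ n * (c * exp (k * y)) := by
  rw [iteratedDeriv_const_mul_field, iteratedDeriv_exp_const_mul]
  ring

theorem deriv_const_mul_exp_const_mul (c k y : ℝ) :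
    deriv (fun y => c * exp (k * y)) y = k * (c * exp (k * y)) := by
  simpa using iteratedDeriv_const_mul_exp_const_mul 1 c k y

section Quadrant

variable {ι : Type*} {l : Filter ι} {f g : ι → ℝ}

theorem tendsto_add_atTop_of_sq_add_sq (hf : ∀ᶠ i in l, 0 ≤ f i) (hg : ∀ᶠ i in l, 0 ≤ g i)
    (h : Tendsto (fun i => f i ^ 2 + g i ^ 2) l atTop) :
    Tendsto (fun i => f i + g i) l atTop := by
  refine tendsto_atTop_mono' l ?_ (Real.tendsto_sqrt_atTop.comp h)
  filter_upwards [hf, hg] with i hfi hgi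
  refine Real.sqrt_le_iff.mpr ⟨add_nonneg hfi hgi, ?_⟩
  linarith [mul_nonneg hfi hgi, add_sq (f i) (g i)]

theorem tendsto_mul_add_mul_atTop_of_sq_add_sq {m k : ℝ} (hm : 0 < m) (hk : 0 < k)
    (hf : ∀ᶠ i in l, 0 ≤ f i) (hg : ∀ᶠ i in l, 0 ≤ g i)
    (h : Tendsto (fun i => f i ^ 2 + g i ^ 2) l atTop) :
    Tendsto (fun i => m * f i + k * g i) l atTop := by
  refine tendsto_atTop_mono' l ?_
    ((tendsto_add_atTop_of_sq_add_sq hf hg h).const_mul_atTop (lt_min hm hk))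
  filter_upwards [hf, hg] with i hfi hgi
  calc min m k * (f i + g i) = min m k * f i + min m k * g i := mul_add _ _ _
    _ ≤ m * f i + k * g i := by
      gcongr
      exacts [min_le_left m k, min_le_right m k]

theorem tendsto_const_mul_exp_mul_exp_nhds_zero (c : ℝ) {m k : ℝ} (hm : m < 0) (hk : k < 0)
    (hf : ∀ᶠ i in l, 0 ≤ f i) (hg : ∀ᶠ i in l, 0 ≤ g i)
    (h : Tendsto (fun i => f i ^ 2 + g i ^ 2) l atTop) :
    Tendsto (fun i => c * exp (m * f i) * exp (k * g i)) l (nhds 0) := by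
  have hlin := tendsto_mul_add_mul_atTop_of_sq_add_sq (neg_pos.mpr hm) (neg_pos.mpr hk) hf hg h
  have hexp := (Real.tendsto_exp_neg_atTop_nhds_zero.comp hlin).const_mul c
  rw [mul_zero] at hexp
  refine hexp.congr fun i => ?_
  rw [Function.comp_apply, mul_assoc, ← Real.exp_add]
  ring_nf

end Quadrant

theorem laplace_domain_incomplete_lumped_general (a lam α γ s C : ℝ)
    (ha : a ≠ 0) (hα : 0 ≤ α) (hs : 0 < s)
    (K : ℝ) (hK : K = -lam / a ^ 2 + √(lam ^ 2 / a ^ 4 + 4 * s / a ^ 2))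
    (v : ℝ → ℝ → ℝ)
    (hv : ∀ x z : ℝ, v x z =
      C * exp (γ * x - x * √(γ ^ 2 + s + (α / 2) * K)) * exp (-(z / 2) * K)) :
    (∀ x z : ℝ, s * v x z =
      a ^ 2 * iteratedDeriv 2 (fun z' => v x z') z - lam * deriv (fun z' => v x z') z) ∧
    (∀ x : ℝ, s * v x 0 =
      iteratedDeriv 2 (fun x' => v x' 0) x - 2 * γ * deriv (fun x' => v x' 0) x +
        α * deriv (fun z' => v x z') 0) ∧
    v 0 0 = C ∧
    Tendsto (fun w : ℝ × ℝ => v w.1 w.2)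
      ((comap (fun w : ℝ × ℝ => w.1 ^ 2 + w.2 ^ 2) atTop) ⊓
        𝓟 (Ici (0 : ℝ) ×ˢ Ici (0 : ℝ))) (nhds 0) := by
  have hq : 0 < 4 * s / a ^ 2 := by positivity
  replace hK : K = -(lam / a ^ 2) + √((lam / a ^ 2) ^ 2 + 4 * s / a ^ 2) := by
    rw [hK]; ring_nf
  have hK_pos : 0 < K := by linarith [lt_sqrt_sq_add (lam / a ^ 2) hq]
  have hK_root : a ^ 2 * (K / 2) ^ 2 + lam * (K / 2) = s := by
    have hroot := sq_add_two_mul_eq_of_eq_neg_add_sqrt (by positivity) hK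
    field_simp at hroot
    linarith
  rw [add_assoc] at hv
  set R := √(γ ^ 2 + (s + α / 2 * K))
  have hR_sq : R ^ 2 = γ ^ 2 + (s + α / 2 * K) := Real.sq_sqrt (by positivity)
  have hR_gt : γ < R := lt_sqrt_sq_add γ (by positivity)
  obtain rfl : v = fun x z => C * exp ((γ - R) * x) * exp (-(K / 2) * z) := by
    ext x z; rw [hv]; ring_nf
  refine ⟨fun x z => ?_, fun x => ?_, by simp, ?_⟩
  · rw [iteratedDeriv_const_mul_exp_const_mul, deriv_const_mul_exp_const_mul]
    linear_combination (-C * exp ((γ - R) * x) * exp (-(K / 2) * z)) * hK_root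
  · simp only [iteratedDeriv_const_mul_exp_const_mul, deriv_const_mul_exp_const_mul, mul_zero,
      exp_zero, mul_one]
    linear_combination (-C * exp ((γ - R) * x)) * hR_sq
  · exact tendsto_const_mul_exp_mul_exp_nhds_zero C (by linarith) (by linarith)
      (mem_inf_of_right <| mem_principal.mpr fun _ hw => hw.1)
      (mem_inf_of_right <| mem_principal.mpr fun _ hw => hw.2)
      (tendsto_comap.mono_left inf_le_left)

/-- Verification of the Laplace-domain solution (3.11) of the incomplete lumped
formulation: with `K = −λ/a² + √(λ²/a⁴ + 4s/a²)` and
`v(x,z) = C e^{γx − x√(γ² + s + (α/2)K)} e^{−(z/2)K}`, the function `v`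
satisfies (3.2)–(3.5). -/
theorem laplace_domain_incomplete_lumped (a lam α γ s C : ℝ)
    (ha : 0 < a) (hlam : 0 < lam) (hα : 0 < α) (hγ : 0 < γ) (hs : 0 < s)
    (K : ℝ) (hK : K = -lam / a ^ 2 + Real.sqrt (lam ^ 2 / a ^ 4 + 4 * s / a ^ 2))
    (v : ℝ → ℝ → ℝ)
    (hv : ∀ x z : ℝ, v x z =
      C * Real.exp (γ * x - x * Real.sqrt (γ ^ 2 + s + (α / 2) * K)) *
        Real.exp (-(z / 2) * K)) :
    (∀ x z : ℝ, s * v x z =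
      a ^ 2 * iteratedDeriv 2 (fun z' => v x z') z - lam * deriv (fun z' => v x z') z) ∧
    (∀ x : ℝ, s * v x 0 =
      iteratedDeriv 2 (fun x' => v x' 0) x - 2 * γ * deriv (fun x' => v x' 0) x +
        α * deriv (fun z' => v x z') 0) ∧
    v 0 0 = C ∧
    Tendsto (fun w : ℝ × ℝ => v w.1 w.2)
      ((comap (fun w : ℝ × ℝ => w.1 ^ 2 + w.2 ^ 2) atTop) ⊓
        𝓟 (Ici (0 : ℝ) ×ˢ Ici (0 : ℝ))) (nhds 0) :=
  laplace_domain_incomplete_lumped_general a lam α γ s C ha.ne' hα.le hs K hK v hv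
end
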